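/- Let Ω ⊂ ℝⁿ be a bounded Lipschitz domain, let f ∈ C¹([0,∞)) be convex with f(0) = f'(0) = 0 and of linear growth νt − L ≤ f(t) ≤ L(t+1) for all t ≥ 0, and let T₀ ∈ L^∞(Ω;ℝ^{N×n}) satisfy ‖T₀‖_{L^∞(Ω;ℝ^{N×n})} < f^∞(1). Let u_k ∈ W^{1,2}(Ω;ℝ^N) be, for each k ∈ ℕ, the minimiser of 𝔉_k with (u_k)_Ω = 0. Then (u_k) is a minimising sequence for 𝔉 in W^{1,1}(Ω;ℝ^N), with lim_{k→∞} inf_{W^{1,2}(Ω;ℝ^N)} 𝔉_k = inf_{W^{1,1}(Ω;ℝ^N)} 𝔉; moreover k^{−1/2} ∇u_k → 0 strongly in L²(Ω;ℝ^{N×n}) and sup_{k∈ℕ} (‖u_k‖_{W^{1,1}(Ω;ℝ^N)} + k⁻¹‖u_k‖²_{W^{1,2}(Ω;ℝ^N)}) < ∞. -/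

import Mathlib

open MeasureTheory Filter Topology Set
open scoped ENNReal RealInnerProductSpace

noncomputable section

/-- Euclidean space `ℝⁿ`. -/
abbrev EVec (n : ℕ) := EuclideanSpace ℝ (Fin n)

/-- Frobenius inner product of two "matrices". -/
def mdot {ι κ : Type*} [Fintype ι] [Fintype κ] (A B : ι → κ → ℝ) : ℝ :=
  ∑ a, ∑ i, A a i * B a i

/-- Frobenius norm. -/
noncomputable def mnorm {ι κ : Type*} [Fintype ι] [Fintype κ] (A : ι → κ → ℝ) : ℝ :=
  Real.sqrt (mdot A A)

/-- Euclidean norm of a vector given as a tuple. -/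
noncomputable def vnorm {ι : Type*} [Fintype ι] (v : ι → ℝ) : ℝ :=
  Real.sqrt (∑ a, v a ^ 2)

/-- `Ω ⊆ ℝⁿ` is a (nonempty, open, connected) Lipschitz domain: every boundary point has
a neighbourhood on which `Ω` can be flattened to a half space by a bi-Lipschitz map. -/
def IsLipschitzDomain {n : ℕ} (Ω : Set (EVec n)) : Prop :=
  IsOpen Ω ∧ Ω.Nonempty ∧ IsConnected Ω ∧
  ∀ x ∈ frontier Ω, ∃ (U : Set (EVec n)) (h hinv : EVec n → EVec n) (K : NNReal)
      (e : EVec n),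
    ‖e‖ = 1 ∧ IsOpen U ∧ x ∈ U ∧ LipschitzOnWith K h U ∧
    LipschitzOnWith K hinv (h '' U) ∧ (∀ y ∈ U, hinv (h y) = y) ∧
    h '' (U ∩ Ω) = (h '' U) ∩ {y : EVec n | 0 < ⟪e, y⟫}

/-- `Du` is the weak (distributional) gradient of `u` on `Ω`, and both are integrable;
i.e. `u ∈ W^{1,1}(Ω; ℝ^ι)` with weak gradient `Du`. -/
def HasWeakDerivOn {n : ℕ} {ι : Type*} [Fintype ι] (Ω : Set (EVec n))
    (u : EVec n → ι → ℝ) (Du : EVec n → ι → Fin n → ℝ) : Prop :=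
  IntegrableOn u Ω volume ∧ IntegrableOn Du Ω volume ∧
  ∀ φ : EVec n → ℝ, ContDiff ℝ 1 φ → HasCompactSupport φ → tsupport φ ⊆ Ω →
    ∀ (a : ι) (i : Fin n),
      ∫ x in Ω, u x a * fderiv ℝ φ x (EuclideanSpace.single i 1) =
        - ∫ x in Ω, Du x a i * φ x

/-- `u ∈ W^{1,2}(Ω;ℝ^ι)` with weak gradient `Du`. -/
def MemW12 {n : ℕ} {ι : Type*} [Fintype ι] (Ω : Set (EVec n))
    (u : EVec n → ι → ℝ) (Du : EVec n → ι → Fin n → ℝ) : Prop :=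
  HasWeakDerivOn Ω u Du ∧ IntegrableOn (fun x => vnorm (u x) ^ 2) Ω volume ∧
    IntegrableOn (fun x => mnorm (Du x) ^ 2) Ω volume

/-- vanishing mean value `(u)_Ω = 0`. -/
def ZeroMean {n : ℕ} {ι : Type*} [Fintype ι] (Ω : Set (EVec n))
    (u : EVec n → ι → ℝ) : Prop :=
  ∀ a : ι, ∫ x in Ω, u x a = 0

/-- The `L^∞(Ω)` norm of a matrix field (w.r.t. the pointwise Frobenius norm). -/
noncomputable def linfNormOn {n N : ℕ} (Ω : Set (EVec n))
    (T : EVec n → Fin N → Fin n → ℝ) : ℝ≥0∞ :=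
  essSup (fun x => ENNReal.ofReal (mnorm (T x))) (volume.restrict Ω)

/-- `T ∈ W^{1,∞}(Ω)`: bounded and Lipschitz on `Ω`. -/
def MemW1inf {n N : ℕ} (Ω : Set (EVec n)) (T : EVec n → Fin N → Fin n → ℝ) : Prop :=
  ∃ C : NNReal, (∀ x ∈ Ω, ‖T x‖ ≤ C) ∧ LipschitzOnWith C T Ω

/-- `T ∈ W^{2,∞}(Ω)`: `T` is bounded with bounded Lipschitz derivative on `Ω`. -/
def MemW2inf {n N : ℕ} (Ω : Set (EVec n)) (T : EVec n → Fin N → Fin n → ℝ) : Prop :=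
  ∃ (C : NNReal) (DT : EVec n → EVec n →L[ℝ] (Fin N → Fin n → ℝ)),
    (∀ x ∈ Ω, ‖T x‖ ≤ C) ∧ (∀ x ∈ Ω, HasFDerivWithinAt T (DT x) Ω x) ∧
    (∀ x ∈ Ω, ‖DT x‖ ≤ C) ∧ LipschitzOnWith C DT Ω

/-- The nonlinear map `A(z) = f'(|z|) z / |z|` (equal to `0` at `z = 0`). -/
noncomputable def Amap {N n : ℕ} (f' : ℝ → ℝ) (z : Fin N → Fin n → ℝ) :
    Fin N → Fin n → ℝ :=
  fun a i => (f' (mnorm z) / mnorm z) * z a i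

/-- `u` is a weak solution of the Neumann problem for the integrand `f(|·|)` and datum `T₀`. -/
def IsWeakSolution {n N : ℕ} (Ω : Set (EVec n)) (f' : ℝ → ℝ)
    (T₀ : EVec n → Fin N → Fin n → ℝ)
    (u : EVec n → Fin N → ℝ) (Du : EVec n → Fin N → Fin n → ℝ) : Prop :=
  HasWeakDerivOn Ω u Du ∧
  ∀ φ Dφ, HasWeakDerivOn Ω φ Dφ →
    ∫ x in Ω, mdot (Amap f' (Du x)) (Dφ x) = ∫ x in Ω, mdot (T₀ x) (Dφ x)

/-- The functional `𝔉[w] = ∫_Ω (f(|∇w|) − T₀ · ∇w) dx` (as a function of the gradient). -/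
noncomputable def FF {n N : ℕ} (Ω : Set (EVec n)) (f : ℝ → ℝ)
    (T₀ : EVec n → Fin N → Fin n → ℝ) (Du : EVec n → Fin N → Fin n → ℝ) : ℝ :=
  ∫ x in Ω, (f (mnorm (Du x)) - mdot (T₀ x) (Du x))

/-- The regularised functional `𝔉_k[w] = 𝔉[w] + (2k)⁻¹ ∫_Ω |∇w|² dx`. -/
noncomputable def FFk {n N : ℕ} (Ω : Set (EVec n)) (f : ℝ → ℝ)
    (T₀ : EVec n → Fin N → Fin n → ℝ) (k : ℕ)
    (Du : EVec n → Fin N → Fin n → ℝ) : ℝ :=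
  FF Ω f T₀ Du + (2 * (k : ℝ))⁻¹ * ∫ x in Ω, mnorm (Du x) ^ 2

end

open MeasureTheory Filter Topology Set
open scoped ENNReal RealInnerProductSpace NNReal

section PartOne

variable {E : Type*} [NormedAddCommGroup E] [InnerProductSpace ℝ E] [FiniteDimensional ℝ E]
  [MeasurableSpace E] [BorelSpace E] (μ : Measure E) [μ.IsAddHaarMeasure]

theorem lip_image_measure_le {K : ℝ≥0} {f : E → E} {s : Set E} (hf : LipschitzOnWith K f s) :
    μ (f '' s) ≤ (K : ℝ≥0∞) ^ (Module.finrank ℝ E) * μ s := by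
  have h := hf.hausdorffMeasure_image_le (d := (Module.finrank ℝ E : ℝ)) (by positivity)
  have h2 := Measure.isAddLeftInvariant_eq_smul μ (Measure.hausdorffMeasure (X := E) (Module.finrank ℝ E : ℝ))
  rw [h2]
  simp only [Measure.smul_apply]
  rw [ENNReal.rpow_natCast] at h
  rw [ENNReal.smul_def, ENNReal.smul_def, smul_eq_mul, smul_eq_mul]
  calc _ ≤ _ := mul_le_mul_right h _
    _ = _ := by ring

theorem det_interp (ε : ℝ) (hε : 0 < ε) (d : ℕ) :
    ∃ (t c : Fin (d+1) → ℝ), (∀ j, 0 ≤ t j ∧ t j < ε) ∧ (∑ j, c j = 1) ∧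
      ∀ p : Polynomial ℝ, p.natDegree ≤ d → p.eval 1 = ∑ j, c j * p.eval (t j) := by
  classical
  let t : Fin (d+1) → ℝ := fun j => ε * (j / (d+1))
  have ht : Function.Injective t := by
    intro i j h
    simp only [t] at h
    have := mul_left_cancel₀ hε.ne' h
    field_simp at this
    exact Fin.ext (by exact_mod_cast this)
  let c : Fin (d+1) → ℝ := fun j => (Lagrange.basis Finset.univ t j).eval 1
  have key : ∀ p : Polynomial ℝ, p.natDegree ≤ d → p.eval 1 = ∑ j, c j * p.eval (t j) := by
    intro p hp
    have h := Lagrange.eq_interpolate (s := Finset.univ) (v := t) (f := p) ht.injOn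
      (by rw [Finset.card_univ, Fintype.card_fin]
          exact lt_of_le_of_lt Polynomial.degree_le_natDegree (by exact_mod_cast Nat.lt_succ_of_le hp))
    conv_lhs => rw [h]
    rw [Lagrange.interpolate_apply, Polynomial.eval_finsetSum]
    refine Finset.sum_congr rfl fun j _ => ?_
    simp [c, mul_comm]
  refine ⟨t, c, fun j => ⟨by positivity, ?_⟩, ?_, key⟩
  · have : ((j:ℕ):ℝ) / (d+1) < 1 := by
      rw [div_lt_one (by positivity)]; exact_mod_cast j.2
    simp only [t]; nlinarith
  · have := key 1 (by simp)
    simpa using this.symm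

theorem det_poly (A : E →L[ℝ] E) : ∃ p : Polynomial ℝ, p.natDegree ≤ Module.finrank ℝ E ∧
    ∀ t : ℝ, p.eval t = (ContinuousLinearMap.id ℝ E + t • A).det := by
  classical
  let b := Module.finBasis ℝ E
  let M := LinearMap.toMatrix b b (A : E →ₗ[ℝ] E)
  refine ⟨Matrix.det ((Polynomial.X : Polynomial ℝ) • M.map Polynomial.C + (1 : Matrix _ _ ℝ).map Polynomial.C), ?_, ?_⟩
  · simpa using Polynomial.natDegree_det_X_add_C_le M 1
  · intro t
    rw [ContinuousLinearMap.det, ← LinearMap.det_toMatrix b]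
    have := (Polynomial.evalRingHom t).map_det
      ((Polynomial.X : Polynomial ℝ) • M.map Polynomial.C + (1 : Matrix _ _ ℝ).map Polynomial.C)
    rw [← Polynomial.coe_evalRingHom, this]
    congr 1
    have h2 : (LinearMap.toMatrix b b) ((ContinuousLinearMap.id ℝ E + t • A : E →L[ℝ] E) : E →ₗ[ℝ] E)
        = 1 + t • M := by
      rw [ContinuousLinearMap.toLinearMap_add, ContinuousLinearMap.toLinearMap_smul, map_add]
      congr 1
      · exact LinearMap.toMatrix_id b
      · exact map_smul _ _ _
    rw [h2]
    ext i j
    rw [RingHom.mapMatrix_apply, Matrix.map_apply, Matrix.add_apply, Matrix.add_apply, Matrix.smul_apply,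
      Matrix.smul_apply]
    by_cases hij : i = j <;> simp [hij, Matrix.one_apply] <;> ring

theorem det_nonneg_small (A : E →L[ℝ] E) {t : ℝ} (ht : 0 ≤ t) (h : t * ‖A‖ < 1) :
    0 ≤ (ContinuousLinearMap.id ℝ E + t • A).det := by
  obtain ⟨p, -, hp⟩ := det_poly A
  by_contra! hneg
  rw [← hp] at hneg
  have h0 : p.eval 0 = 1 := by rw [hp]; simp [ContinuousLinearMap.det]
  obtain ⟨s, hs, hs0⟩ : ∃ s ∈ Icc 0 t, p.eval s = 0 := by
    have := intermediate_value_Icc' ht (f := fun s => p.eval s) (by fun_prop)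
    exact this ⟨hneg.le, by simp [h0]⟩
  rw [hp, ContinuousLinearMap.det] at hs0
  have := LinearMap.bot_lt_ker_of_det_eq_zero hs0
  obtain ⟨v, hv, hv0⟩ := (Submodule.ne_bot_iff _).1 this.ne'
  have hv' : v + s • A v = 0 := by simpa using hv
  have h1 : ‖v‖ = s * ‖A v‖ := by
    have h5 := congrArg norm (eq_neg_of_add_eq_zero_left hv')
    rwa [norm_neg, norm_smul, Real.norm_of_nonneg hs.1] at h5
  have h2 : ‖A v‖ ≤ ‖A‖ * ‖v‖ := A.le_opNorm v
  have hvp : 0 < ‖v‖ := norm_pos_iff.2 hv0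
  have h3 : s * ‖A‖ < 1 := lt_of_le_of_lt (mul_le_mul_of_nonneg_right hs.2 (norm_nonneg _)) h
  nlinarith [mul_le_mul_of_nonneg_left h2 hs.1]

theorem vol_small {M : ℝ≥0} {φ : E → E} (hφ : LipschitzWith M φ) (y : E) (R : ℝ)
    (h0 : ∀ x ∉ Metric.ball y R, φ x = 0) {t : ℝ} (ht : 0 ≤ t) (htM : t * M < 1) :
    ∫ x in Metric.ball y R, (ContinuousLinearMap.id ℝ E + t • fderiv ℝ φ x).det ∂μ
      = μ.real (Metric.ball y R) := by
  set B := Metric.ball y R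
  let f : E → E := fun x => x + t • φ x
  let D : Set E := {x | DifferentiableAt ℝ φ x} ∩ B
  have hDm : MeasurableSet D := (measurableSet_of_differentiableAt ℝ φ).inter Metric.isOpen_ball.measurableSet
  have hnull : μ (B \ D) = 0 := by
    refine measure_mono_null (t := {x | ¬ DifferentiableAt ℝ φ x}) ?_ hφ.ae_differentiableAt
    rintro x ⟨h1, h2⟩ h3
    exact h2 ⟨h3, h1⟩
  let T : ℝ≥0 := ⟨t, ht⟩
  have hlip : LipschitzWith (T * M) (fun x => t • φ x) := by
    refine LipschitzWith.of_dist_le_mul fun x z => ?_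
    rw [dist_smul₀, Real.norm_of_nonneg ht, NNReal.coe_mul, mul_assoc]
    exact mul_le_mul_of_nonneg_left (hφ.dist_le_mul x z) ht
  have happ : ApproximatesLinearOn f ((ContinuousLinearEquiv.refl ℝ E : E ≃L[ℝ] E) : E →L[ℝ] E) univ (T * M) := by
    intro x _ z _
    have : f x - f z - ((ContinuousLinearEquiv.refl ℝ E : E ≃L[ℝ] E) : E →L[ℝ] E) (x - z)
        = t • φ x - t • φ z := by simp [f]; abel
    rw [this, ← dist_eq_norm, ← dist_eq_norm]
    exact hlip.dist_le_mul x z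
  have hc : Subsingleton E ∨ (T * M : ℝ≥0) <
      ‖((ContinuousLinearEquiv.refl ℝ E : E ≃L[ℝ] E).symm : E →L[ℝ] E)‖₊⁻¹ := by
    rcases subsingleton_or_nontrivial E with h | h
    · exact Or.inl h
    · right
      have : ‖((ContinuousLinearEquiv.refl ℝ E : E ≃L[ℝ] E).symm : E →L[ℝ] E)‖₊ = 1 := by
        apply NNReal.eq; simp
      rw [this, inv_one]
      exact_mod_cast htM
  have hinj : Function.Injective f := by
    have := happ.injective hc
    intro a b hab
    have h := @this ⟨a, trivial⟩ ⟨b, trivial⟩ (by simpa using hab)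
    exact congrArg Subtype.val h
  have hsurj : Function.Surjective f := happ.surjective hc
  have hfix : ∀ x ∉ B, f x = x := fun x hx => by simp [f, h0 x hx]
  have himg : f '' B = B := by
    apply Subset.antisymm
    · rintro _ ⟨x, hx, rfl⟩
      by_contra hn
      have := hinj (hfix _ hn)
      exact hn (by rw [this]; exact hx)
    · intro z hz
      obtain ⟨x, rfl⟩ := hsurj z
      refine ⟨x, ?_, rfl⟩
      by_contra hn
      rw [hfix x hn] at hz; exact hn hz
  have hflip : LipschitzWith (1 + T * M) f := LipschitzWith.id.add hlip
  have hDimg : μ (f '' D) = μ B := by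
    apply le_antisymm
    · rw [← himg]; exact measure_mono (by rw [himg, ← himg]; exact image_mono inter_subset_right)
    · have : B ⊆ f '' D ∪ f '' (B \ D) := by
        rw [← image_union]
        intro z hz
        rw [← himg] at hz
        refine image_mono ?_ hz
        intro w hw
        by_cases hwD : w ∈ D
        · exact Or.inl hwD
        · exact Or.inr ⟨hw, hwD⟩
      calc μ B ≤ μ (f '' D) + μ (f '' (B \ D)) := (measure_mono this).trans (measure_union_le _ _)
        _ = μ (f '' D) := by
          have := lip_image_measure_le μ (hflip.lipschitzOnWith (s := B \ D))
          rw [hnull, mul_zero] at this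
          rw [le_zero_iff.1 this, add_zero]
  have hder : ∀ x ∈ D, HasFDerivWithinAt f (ContinuousLinearMap.id ℝ E + t • fderiv ℝ φ x) D x := by
    intro x hx
    exact ((hasFDerivAt_id x).add (hx.1.hasFDerivAt.const_smul t)).hasFDerivWithinAt
  have hlint := lintegral_abs_det_fderiv_eq_addHaar_image μ hDm hder hinj.injOn
  have hpos : ∀ x, 0 ≤ (ContinuousLinearMap.id ℝ E + t • fderiv ℝ φ x).det := by
    intro x
    apply det_nonneg_small _ ht
    exact lt_of_le_of_lt (mul_le_mul_of_nonneg_left (norm_fderiv_le_of_lipschitz ℝ hφ) ht) htM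
  have hmeas : Measurable fun x => (ContinuousLinearMap.id ℝ E + t • fderiv ℝ φ x).det :=
    ContinuousLinearMap.continuous_det.measurable.comp ((measurable_fderiv ℝ φ).const_smul t |>.const_add _)
  have hBD : (B : Set E) =ᵐ[μ] D := by
    refine (ae_eq_of_subset_of_measure_ge inter_subset_right ?_ hDm.nullMeasurableSet ?_).symm
    · have : B ⊆ D ∪ (B \ D) := by intro x hx; by_cases h : x ∈ D <;> simp [h, hx]
      calc μ B ≤ μ D + μ (B \ D) := (measure_mono this).trans (measure_union_le _ _)
        _ = μ D := by rw [hnull, add_zero]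
    · exact Metric.isBounded_ball.measure_lt_top.ne
  rw [setIntegral_congr_set hBD, integral_eq_lintegral_of_nonneg_ae (ae_of_all _ hpos) hmeas.aestronglyMeasurable]
  simp only [abs_of_nonneg (hpos _)] at hlint
  rw [hlint, hDimg]
  rfl

theorem vol_all {M : ℝ≥0} {φ : E → E} (hφ : LipschitzWith M φ) (y : E) (R : ℝ)
    (h0 : ∀ x ∉ Metric.ball y R, φ x = 0) :
    ∫ x in Metric.ball y R, (ContinuousLinearMap.id ℝ E + fderiv ℝ φ x).det ∂μ
      = μ.real (Metric.ball y R) := by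
  obtain ⟨t, c, ht, hc, hp⟩ := det_interp (1 / (M + 1)) (by positivity) (Module.finrank ℝ E)
  have h1 : ∀ x, (ContinuousLinearMap.id ℝ E + fderiv ℝ φ x).det =
      ∑ j, c j * (ContinuousLinearMap.id ℝ E + t j • fderiv ℝ φ x).det := by
    intro x
    obtain ⟨p, hpd, hpe⟩ := det_poly (fderiv ℝ φ x)
    have := hp p hpd
    simpa [hpe] using this
  have hint : ∀ s : ℝ, IntegrableOn (fun x => (ContinuousLinearMap.id ℝ E + s • fderiv ℝ φ x).det) (Metric.ball y R) μ := by
    intro s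
    have hmeas : Measurable fun x => (ContinuousLinearMap.id ℝ E + s • fderiv ℝ φ x).det :=
      ContinuousLinearMap.continuous_det.measurable.comp ((measurable_fderiv ℝ φ).const_smul s |>.const_add _)
    obtain ⟨C, hC⟩ := ((isCompact_closedBall (0 : E →L[ℝ] E) M).image
      (f := fun A => (ContinuousLinearMap.id ℝ E + s • A).det)
      (ContinuousLinearMap.continuous_det.comp (by fun_prop))).isBounded.exists_norm_le
    refine Measure.integrableOn_of_bounded (M := C) Metric.isBounded_ball.measure_lt_top.ne
      hmeas.aestronglyMeasurable (ae_of_all _ fun x => hC _ ?_)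
    exact ⟨fderiv ℝ φ x, by simpa using norm_fderiv_le_of_lipschitz ℝ hφ, rfl⟩
  simp_rw [h1]
  rw [integral_finsetSum _ (fun j _ => (hint (t j)).const_mul (c j))]
  simp_rw [integral_const_mul]
  have : ∀ j, ∫ x in Metric.ball y R, (ContinuousLinearMap.id ℝ E + t j • fderiv ℝ φ x).det ∂μ
      = μ.real (Metric.ball y R) := fun j => by
    apply vol_small μ hφ y R h0 (ht j).1
    have := (ht j).2
    rw [lt_div_iff₀ (by positivity)] at this
    nlinarith [(ht j).1]
  simp_rw [this]
  rw [← Finset.sum_mul, hc, one_mul]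

theorem no_retraction {M : ℝ≥0} {g : E → E} (hg : LipschitzWith M g) (y : E) (R : ℝ) (hR : 0 < R)
    (h0 : ∀ x ∉ Metric.ball y R, g x = x) (h1 : ∀ x ∈ Metric.ball y R, ‖g x - y‖ = R) : False := by
  let μ : Measure E := Measure.addHaar
  have hφ : LipschitzWith (M + 1) (fun x => g x - x) := hg.sub LipschitzWith.id
  have h := vol_all μ hφ y R (fun x hx => by simp [h0 x hx])
  have hz : ∀ᵐ x ∂(μ.restrict (Metric.ball y R)),
      (ContinuousLinearMap.id ℝ E + fderiv ℝ (fun x => g x - x) x).det = 0 := by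
    rw [ae_restrict_iff' Metric.isOpen_ball.measurableSet]
    filter_upwards [hg.ae_differentiableAt (μ := μ)] with x hx hxB
    have : ContinuousLinearMap.id ℝ E + fderiv ℝ (fun x => g x - x) x = fderiv ℝ g x := by
      rw [fderiv_fun_sub hx differentiableAt_fun_id]
      simp
    rw [this]
    have hconst : (fun z => ‖g z - y‖ ^ 2) =ᶠ[𝓝 x] fun _ => R ^ 2 := by
      filter_upwards [Metric.isOpen_ball.mem_nhds hxB] with z hz
      rw [h1 z hz]
    have hd := (hx.hasFDerivAt.sub_const y).norm_sq
    have hd0 : fderiv ℝ (fun z => ‖g z - y‖ ^ 2) x = 0 := by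
      rw [hconst.fderiv_eq]; simp
    rw [hd.fderiv] at hd0
    by_contra hne
    have hu : IsUnit (LinearMap.det ((fderiv ℝ g x : E →L[ℝ] E) : E →ₗ[ℝ] E)) := isUnit_iff_ne_zero.2 hne
    have hsurj : Function.Surjective (fderiv ℝ g x) := (LinearEquiv.ofIsUnitDet (v := Module.finBasis ℝ E) (v' := Module.finBasis ℝ E) (f := ((fderiv ℝ g x : E →L[ℝ] E) : E →ₗ[ℝ] E)) (by rw [LinearMap.det_toMatrix]; exact hu)).surjective
    obtain ⟨v, hv⟩ := hsurj (g x - y)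
    have := congrArg (fun A => A v) hd0
    have h3 : (2:ℝ) * ⟪g x - y, g x - y⟫ = 0 := by
      rw [← hv]; rw [two_smul] at this; rw [two_mul]
      rw [← hv] at this
      simpa only [ContinuousLinearMap.add_apply, ContinuousLinearMap.comp_apply, innerSL_apply_apply, hv,
        ContinuousLinearMap.zero_apply] using this
    rw [real_inner_self_eq_norm_sq, h1 x hxB] at h3
    nlinarith
  rw [integral_congr_ae hz] at h
  simp only [integral_zero] at h
  have hpos : 0 < μ.real (Metric.ball y R) :=
    ENNReal.toReal_pos (Metric.measure_ball_pos μ y hR).ne' Metric.isBounded_ball.measure_lt_top.ne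
  linarith

theorem lip_smul_of_bdd {α F : Type*} [PseudoMetricSpace α] [NormedAddCommGroup F] [NormedSpace ℝ F]
    {a : α → ℝ} {b : α → F} {Ka Kb A B : ℝ≥0} (ha : LipschitzWith Ka a) (hb : LipschitzWith Kb b)
    (hA : ∀ x, |a x| ≤ A) (hB : ∀ x, a x ≠ 0 → ‖b x‖ ≤ B) :
    LipschitzWith (A * Kb + Ka * B) (fun x => a x • b x) := by
  have key : ∀ x y, a y ≠ 0 → dist (a x • b x) (a y • b y) ≤ (A * Kb + Ka * B) * dist x y := by
    intro x y hy
    have : a x • b x - a y • b y = a x • (b x - b y) + (a x - a y) • b y := by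
      simp [smul_sub, sub_smul]
    rw [dist_eq_norm, this]
    refine (norm_add_le _ _).trans ?_
    rw [norm_smul, norm_smul, Real.norm_eq_abs, Real.norm_eq_abs, ← dist_eq_norm, ← Real.dist_eq]
    have h1 := hb.dist_le_mul x y
    have h2 := ha.dist_le_mul x y
    have h3 : |a x| * dist (b x) (b y) ≤ A * (Kb * dist x y) :=
      mul_le_mul (hA x) h1 dist_nonneg (by positivity)
    have h4 : dist (a x) (a y) * ‖b y‖ ≤ (Ka * dist x y) * B :=
      mul_le_mul h2 (hB y hy) (norm_nonneg _) (by positivity)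
    nlinarith
  refine LipschitzWith.of_dist_le_mul fun x y => ?_
  push_cast
  by_cases hy : a y = 0
  · by_cases hx : a x = 0
    · simp only [hx, hy, zero_smul, dist_self]; positivity
    · rw [dist_comm, dist_comm x y]; exact key y x hx
  · exact key x y hy

theorem lip_norm_sub (y : E) : LipschitzWith 1 (fun z : E => ‖z - y‖) := by
  refine LipschitzWith.of_dist_le_mul fun a b => ?_
  rw [Real.dist_eq, dist_eq_norm]
  refine (abs_norm_sub_norm_le _ _).trans ?_
  simp

theorem exists_radial (y : E) {δ R : ℝ} (hδ : 0 < δ) (hR : 0 < R) :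
    ∃ (ρ : E → E) (M : ℝ≥0), LipschitzWith M ρ ∧
      (∀ z, δ ≤ ‖z - y‖ → ‖z - y‖ ≤ R → ‖ρ z - y‖ = R) ∧ (∀ z, δ ≤ ‖z - y‖ → R ≤ ‖z - y‖ → ρ z = z) := by
  let a : E → ℝ := fun z => max 0 (R / max δ ‖z - y‖ - 1)
  have hinv : LipschitzWith (Real.toNNReal (R / δ ^ 2)) (fun r : ℝ => R / max δ r) := by
    refine LipschitzWith.of_dist_le_mul fun r s => ?_
    rw [Real.coe_toNNReal _ (by positivity), Real.dist_eq, Real.dist_eq]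
    have h1 : δ ≤ max δ r := le_max_left _ _
    have h2 : δ ≤ max δ s := le_max_left _ _
    have h3 : |max δ r - max δ s| ≤ |r - s| := by
      have := abs_max_sub_max_le_abs r s δ
      rwa [max_comm r, max_comm s] at this
    have h1' : 0 < max δ r := hδ.trans_le h1
    have h2' : 0 < max δ s := hδ.trans_le h2
    have : R / max δ r - R / max δ s = R * (max δ s - max δ r) / (max δ r * max δ s) := by
      field_simp
    rw [this, abs_div, abs_mul, abs_of_pos hR, abs_of_pos (mul_pos h1' h2'), abs_sub_comm, div_mul_eq_mul_div]
    have h4 : δ ^ 2 ≤ max δ r * max δ s := by nlinarith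
    exact div_le_div₀ (by positivity) (mul_le_mul_of_nonneg_left h3 hR.le) (by positivity) h4
  have ha : LipschitzWith (Real.toNNReal (R / δ ^ 2)) a := by
    have h1 : LipschitzWith 1 (fun z : E => ‖z - y‖) := by
      exact lip_norm_sub y
    have h2 := (hinv.comp h1).sub (LipschitzWith.const (1:ℝ))
    simpa [a, max_comm] using h2.const_max 0
  have hb : LipschitzWith 1 (fun z : E => z - y) := by
    simpa using (LipschitzWith.id.sub (LipschitzWith.const y) : LipschitzWith (1+0) fun z : E => z - y)
  have hab := lip_smul_of_bdd (A := Real.toNNReal (R/δ)) (B := Real.toNNReal R) ha hb (by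
    intro x
    have h1 : R / max δ ‖x - y‖ ≤ R / δ := div_le_div_of_nonneg_left hR.le hδ (le_max_left _ _)
    rw [Real.coe_toNNReal _ (by positivity), abs_of_nonneg (le_max_left _ _)]
    apply max_le (by positivity); linarith) (by
    intro x hx
    rw [Real.coe_toNNReal _ hR.le]
    by_contra! hlt
    apply hx
    apply max_eq_left
    rw [sub_nonpos, div_le_one (lt_max_of_lt_left hδ)]
    exact hlt.le.trans (le_max_right _ _))
  refine ⟨fun z => z + a z • (z - y), _, LipschitzWith.id.add hab, ?_, ?_⟩
  · intro z h1 h2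
    have h0 : 0 < ‖z - y‖ := hδ.trans_le h1
    have : a z = R / ‖z - y‖ - 1 := by
      simp only [a, max_eq_right h1]
      apply max_eq_right
      rw [sub_nonneg, le_div_iff₀ h0]; linarith
    have h3 : z + a z • (z - y) - y = (R / ‖z - y‖) • (z - y) := by
      rw [this, sub_smul, one_smul]; abel
    rw [h3, norm_smul, Real.norm_of_nonneg (by positivity)]
    field_simp
  · intro z h1 h2
    have : a z = 0 := by
      apply max_eq_left
      rw [sub_nonpos, div_le_one (lt_max_of_lt_left hδ)]
      exact h2.trans (le_max_right _ _)
    simp [this]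

theorem lip_surj {M : ℝ≥0} {g : E → E} (hg : LipschitzWith M g) (R₀ : ℝ)
    (h0 : ∀ x, R₀ ≤ ‖x‖ → g x = x) : Function.Surjective g := by
  intro y
  by_contra! hy
  set R₁ := max R₀ (‖y‖ + 1)
  have hR₁ : 0 < R₁ := lt_max_of_lt_right (by positivity)
  have hK := isCompact_closedBall (0 : E) R₁
  have hc : Continuous fun x => ‖g x - y‖ := (hg.continuous.sub continuous_const).norm
  obtain ⟨x₀, -, hx₀⟩ := hK.exists_isMinOn ⟨0, by simp [hR₁.le]⟩ hc.continuousOn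
  obtain ⟨x₂, -, hx₂⟩ := hK.exists_isMaxOn ⟨0, by simp [hR₁.le]⟩ hc.continuousOn
  have hm : 0 < ‖g x₀ - y‖ := norm_pos_iff.2 (sub_ne_zero.2 (hy x₀))
  set δ := min ‖g x₀ - y‖ 1
  have hδ : 0 < δ := lt_min hm one_pos
  have hout : ∀ x, R₁ ≤ ‖x‖ → g x = x := fun x hx => h0 x ((le_max_left _ _).trans hx)
  have hδ' : ∀ x, δ ≤ ‖g x - y‖ := by
    intro x
    by_cases hx : ‖x‖ ≤ R₁
    · exact (min_le_left _ _).trans (hx₀ (by simpa using hx))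
    · rw [hout x (by linarith)]
      have h1 : ‖y‖ + 1 ≤ R₁ := le_max_right _ _
      have h2 : ‖x‖ - ‖y‖ ≤ ‖x - y‖ := norm_sub_norm_le x y
      exact (min_le_right _ _).trans (by linarith)
  set R := max (R₁ + ‖y‖) ‖g x₂ - y‖
  have hR : 0 < R := lt_max_of_lt_left (by positivity)
  obtain ⟨ρ, Mρ, hρ, hρ1, hρ2⟩ := exists_radial y hδ hR
  refine no_retraction (hρ.comp hg) y R hR ?_ ?_
  · intro x hx
    rw [Metric.mem_ball, dist_eq_norm, not_lt] at hx
    have h3 : R₁ + ‖y‖ ≤ R := le_max_left _ _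
    have h4 : ‖x - y‖ ≤ ‖x‖ + ‖y‖ := norm_sub_le x y
    have h5 : g x = x := hout x (by linarith)
    simp only [Function.comp_apply, h5]
    have := hδ' x
    rw [h5] at this
    exact hρ2 x this hx
  · intro x hx
    rw [Metric.mem_ball, dist_eq_norm] at hx
    refine hρ1 _ (hδ' x) ?_
    by_cases hx' : ‖x‖ ≤ R₁
    · exact (hx₂ (by simpa using hx')).trans (le_max_right _ _)
    · rw [hout x (by linarith)]; exact hx.le

theorem lip_near_id {M : ℝ≥0} {Φ : E → E} (hΦ : LipschitzWith M Φ) (x₀ : E) {r : ℝ} (hr : 0 < r)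
    (h : ∀ x ∈ Metric.ball x₀ r, ‖Φ x - x‖ ≤ r / 4) {x₁ : E} (hx₁ : x₁ ∈ Metric.ball x₀ (r / 4)) :
    ∃ x ∈ Metric.ball x₀ r, Φ x = x₁ := by
  let χ : E → ℝ := fun x => max 0 (min 1 (2 - (2 / r) * ‖x - x₀‖))
  have hnorm : LipschitzWith 1 (fun z : E => ‖z - x₀‖) := by
    exact lip_norm_sub x₀
  have hχ : ∃ Kχ : ℝ≥0, LipschitzWith Kχ χ := by
    have h1 : LipschitzWith (Real.toNNReal (2 / r)) (fun z : E => (2 / r) * ‖z - x₀‖) := by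
      refine LipschitzWith.of_dist_le_mul fun a b => ?_
      rw [Real.dist_eq, ← mul_sub, abs_mul, Real.coe_toNNReal _ (by positivity), abs_of_pos (by positivity : 0 < 2 / r)]
      have := hnorm.dist_le_mul a b
      simp only [NNReal.coe_one, one_mul, Real.dist_eq] at this
      exact mul_le_mul_of_nonneg_left this (by positivity)
    have h2 := (((LipschitzWith.const (2:ℝ)).sub h1).const_min 1).const_max 0
    exact ⟨_, h2⟩
  obtain ⟨Kχ, hχ⟩ := hχ
  have hχsupp : ∀ x, χ x ≠ 0 → x ∈ Metric.ball x₀ r := by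
    intro x hx
    by_contra hn
    rw [Metric.mem_ball, dist_eq_norm, not_lt] at hn
    apply hx
    apply max_eq_left
    apply min_le_of_right_le
    have : 2 ≤ 2 / r * ‖x - x₀‖ := by rw [div_mul_eq_mul_div, le_div_iff₀ hr]; linarith
    linarith
  have hχle : ∀ x, |χ x| ≤ 1 := fun x => by
    rw [abs_of_nonneg (le_max_left _ _)]
    exact max_le zero_le_one (min_le_left _ _)
  have hb : LipschitzWith (M + 1) (fun x => Φ x - x) := hΦ.sub LipschitzWith.id
  have hab := lip_smul_of_bdd (A := 1) (B := Real.toNNReal (r/4)) hχ hb (by simpa using hχle) (by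
    intro x hx
    rw [Real.coe_toNNReal _ (by positivity)]
    exact h x (hχsupp x hx))
  obtain ⟨x, hx⟩ := lip_surj (LipschitzWith.id.add hab) (‖x₀‖ + r) (by
    intro x hx
    have : χ x = 0 := by
      by_contra hn
      have := hχsupp x hn
      rw [Metric.mem_ball, dist_eq_norm] at this
      have h2 := norm_sub_norm_le x x₀
      linarith
    simp [this]) x₁
  simp only [id] at hx
  have hdist : ‖x - x₁‖ ≤ r / 4 := by
    have h1 : x - x₁ = -(χ x • (Φ x - x)) := by rw [← hx]; abel
    rw [h1, norm_neg, norm_smul, Real.norm_eq_abs]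
    by_cases h0 : χ x = 0
    · simp [h0]; positivity
    · calc |χ x| * ‖Φ x - x‖ ≤ 1 * (r/4) := mul_le_mul (hχle x) (h x (hχsupp x h0)) (norm_nonneg _) zero_le_one
        _ = r / 4 := one_mul _
  have hxb : ‖x - x₀‖ < r / 2 := by
    rw [Metric.mem_ball, dist_eq_norm] at hx₁
    have : ‖x - x₀‖ ≤ ‖x - x₁‖ + ‖x₁ - x₀‖ := norm_sub_le_norm_sub_add_norm_sub _ _ _
    linarith
  refine ⟨x, by rw [Metric.mem_ball, dist_eq_norm]; linarith, ?_⟩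
  have : χ x = 1 := by
    have h5 : 1 ≤ 2 - 2 / r * ‖x - x₀‖ := by
      have : 2 / r * ‖x - x₀‖ ≤ 1 := by rw [div_mul_eq_mul_div, div_le_iff₀ hr]; linarith
      linarith
    simp only [χ, min_eq_left h5]; norm_num
  rw [this] at hx
  simpa using hx

theorem lip_invariance {M K : ℝ≥0} {H Hi : E → E} (hH : LipschitzWith M H) (hHi : LipschitzWith K Hi)
    (x₀ : E) {r : ℝ} (hr : 0 < r) (hinv : ∀ x ∈ Metric.closedBall x₀ r, Hi (H x) = x) :
    H '' Metric.closedBall x₀ r ∈ 𝓝 (H x₀) := by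
  let μ : Measure E := Measure.addHaar
  set S := H '' Metric.closedBall x₀ r
  have hS : IsClosed S := ((isCompact_closedBall x₀ r).image hH.continuous).isClosed
  set ε := r / (8 * (K + 1)) with hεdef
  have hε : 0 < ε := by positivity
  have hKε : K * (2 * ε) ≤ r / 4 := by
    rw [hεdef]
    have : (K:ℝ) * (2 * (r / (8 * (K + 1)))) = (r / 4) * (K / (K + 1)) := by field_simp; ring
    rw [this]
    have h1 : (K:ℝ) / (K + 1) ≤ 1 := by rw [div_le_one (by positivity)]; linarith
    nlinarith
  refine Metric.mem_nhds_iff.2 ⟨ε, hε, ?_⟩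
  intro y hy
  by_contra hyS
  rw [Metric.mem_ball, dist_comm, dist_eq_norm] at hy
  obtain ⟨δ, hδ, hδS⟩ : ∃ δ > 0, ∀ z ∈ S, δ ≤ ‖z - y‖ := by
    obtain ⟨δ, hδ, h⟩ := Metric.isOpen_iff.1 hS.isOpen_compl y hyS
    refine ⟨δ, hδ, fun z hz => ?_⟩
    by_contra! hlt
    exact h (show z ∈ Metric.ball y δ by rwa [Metric.mem_ball, dist_eq_norm]) hz
  obtain ⟨ρ, Mρ, hρ, hρ1, hρ2⟩ := exists_radial y hδ hε
  have hnull : μ (Hi '' Metric.sphere y ε) = 0 := by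
    have := lip_image_measure_le μ (hHi.lipschitzOnWith (s := Metric.sphere y ε))
    rw [Measure.addHaar_sphere_of_ne_zero μ y hε.ne', mul_zero] at this
    exact le_zero_iff.1 this
  let W : Set E := Metric.ball x₀ (r/4) ∩ {x | ‖H x - y‖ < ε}
  have hWo : IsOpen W := Metric.isOpen_ball.inter
    (isOpen_lt (hH.continuous.sub continuous_const).norm continuous_const)
  have hWpos : 0 < μ W := hWo.measure_pos μ ⟨x₀, Metric.mem_ball_self (by positivity), hy⟩
  obtain ⟨x₁, hx₁W, hx₁⟩ : ∃ x ∈ W, x ∉ Hi '' Metric.sphere y ε := by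
    by_contra! hcon
    exact hWpos.ne' (measure_mono_null hcon hnull)
  obtain ⟨x, hxb, hx⟩ := lip_near_id (hHi.comp (hρ.comp hH)) x₀ hr (by
    intro x hx
    have hx' := Metric.ball_subset_closedBall hx
    have hd := hδS (H x) ⟨x, hx', rfl⟩
    simp only [Function.comp_apply]
    rw [← dist_eq_norm]
    have e1 : dist (Hi (ρ (H x))) x = dist (Hi (ρ (H x))) (Hi (H x)) := by rw [hinv x hx']
    rw [e1]
    refine (hHi.dist_le_mul _ _).trans (le_trans ?_ hKε)
    refine mul_le_mul_of_nonneg_left ?_ K.2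
    rw [dist_eq_norm]
    rcases le_total ‖H x - y‖ ε with h | h
    · have h1 := hρ1 _ hd h
      have : ‖ρ (H x) - H x‖ ≤ ‖ρ (H x) - y‖ + ‖y - H x‖ := norm_sub_le_norm_sub_add_norm_sub _ _ _
      rw [norm_sub_rev y] at this
      linarith
    · rw [hρ2 _ hd h]; simp; positivity) hx₁W.1
  have hx' := Metric.ball_subset_closedBall hxb
  have hd := hδS (H x) ⟨x, hx', rfl⟩
  simp only [Function.comp_apply] at hx
  rcases le_total ‖H x - y‖ ε with h | h
  · exact hx₁ ⟨_, by rw [mem_sphere_iff_norm]; exact hρ1 _ hd h, hx⟩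
  · rw [hρ2 _ hd h, hinv x hx'] at hx
    have := hx₁W.2
    rw [← hx] at this
    exact absurd this (not_lt.2 h)
end PartOne

open MeasureTheory Filter Topology Set
open scoped ENNReal RealInnerProductSpace NNReal

structure LPatch {E : Type*} [NormedAddCommGroup E] [InnerProductSpace ℝ E]
    (Ω : Set E) (x : E) where
  H : E → E
  Hi : E → E
  K : ℝ≥0
  e : E
  P : Set E
  U : Set E
  r : ℝ
  lipH : LipschitzWith K H
  lipHi : LipschitzWith K Hi
  hr : 0 < r
  openU : IsOpen U
  xU : x ∈ U
  mapsH : MapsTo H U (Metric.ball (H x) (2 * r))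
  mapsHi : MapsTo Hi (Metric.ball (H x) (2 * r)) U
  left : ∀ y ∈ U, Hi (H y) = y
  right : ∀ z ∈ Metric.ball (H x) (2 * r), H (Hi z) = z
  openP : IsOpen P
  convP : Convex ℝ P
  mem : ∀ y ∈ U, y ∈ Ω ↔ H y ∈ P
  shift : ∀ z ∈ closure P, ∀ s : ℝ, 0 < s → z + s • e ∈ P
  e_le : ‖e‖ ≤ 1

theorem lpatch_interior {E : Type*} [NormedAddCommGroup E] [InnerProductSpace ℝ E]
    {Ω : Set E} (hΩ : IsOpen Ω) {x : E} (hx : x ∈ Ω) : Nonempty (LPatch Ω x) := by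
  obtain ⟨ρ, hρ, hb⟩ := Metric.isOpen_iff.1 hΩ x hx
  have h2 : 2 * (ρ / 2) = ρ := by ring
  refine ⟨{
    H := id, Hi := id, K := 1, e := 0, P := univ, U := Metric.ball x ρ, r := ρ / 2,
    lipH := LipschitzWith.id, lipHi := LipschitzWith.id, hr := by positivity,
    openU := Metric.isOpen_ball, xU := Metric.mem_ball_self hρ,
    mapsH := ?_, mapsHi := ?_, left := fun _ _ => rfl, right := fun _ _ => rfl,
    openP := isOpen_univ, convP := convex_univ, mem := fun y hy => ?_,
    shift := fun _ _ _ _ => mem_univ _, e_le := by simp }⟩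
  · intro y hy; rw [h2]; exact hy
  · intro y hy; rw [h2] at hy; exact hy
  · simp [hb hy]

theorem lpatch_boundary {E : Type*} [NormedAddCommGroup E] [InnerProductSpace ℝ E]
    [FiniteDimensional ℝ E] {Ω : Set E} {x : E}
    {U : Set E} {h hinv : E → E} {K : ℝ≥0} {e : E} (he : ‖e‖ = 1) (hU : IsOpen U) (hx : x ∈ U)
    (hh : LipschitzOnWith K h U) (hhi : LipschitzOnWith K hinv (h '' U))
    (hl : ∀ y ∈ U, hinv (h y) = y)
    (hm : h '' (U ∩ Ω) = (h '' U) ∩ {y : E | 0 < ⟪e, y⟫}) : Nonempty (LPatch Ω x) := by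
  borelize E
  obtain ⟨H, hH, hHe⟩ := hh.extend_finite_dimension
  obtain ⟨Hi, hHi, hHie⟩ := hhi.extend_finite_dimension
  have hHx : ∀ y ∈ U, H y = h y := fun y hy => (hHe hy).symm
  have hleft : ∀ y ∈ U, Hi (H y) = y := by
    intro y hy
    rw [hHx y hy, ← hHie (mem_image_of_mem h hy), hl y hy]
  obtain ⟨ρ, hρ, hb⟩ := Metric.nhds_basis_closedBall.mem_iff.1 (hU.mem_nhds hx)
  have hinvn := lip_invariance hH hHi x hρ (fun y hy => hleft y (hb hy))
  obtain ⟨r, hr, hbr⟩ := Metric.mem_nhds_iff.1 hinvn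
  have h2 : 2 * (r / 2) = r := by ring
  refine ⟨{
    H := H, Hi := Hi, K := _, e := e, P := {y : E | 0 < ⟪e, y⟫},
    U := U ∩ H ⁻¹' Metric.ball (H x) (2 * (r/2)), r := r / 2,
    lipH := hH, lipHi := hHi, hr := by positivity,
    openU := hU.inter (Metric.isOpen_ball.preimage hH.continuous), 
    xU := ⟨hx, by simp [hr]⟩,
    mapsH := fun y hy => hy.2, mapsHi := ?_, left := fun y hy => hleft y hy.1, right := ?_,
    openP := ?_, convP := ?_, mem := ?_,
    shift := ?_, e_le := he.le }⟩
  · rw [h2]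
    intro z hz
    obtain ⟨y, hy, rfl⟩ := hbr hz
    rw [hleft y (hb hy)]
    exact ⟨hb hy, hz⟩
  · rw [h2]
    intro z hz
    obtain ⟨y, hy, rfl⟩ := hbr hz
    rw [hleft y (hb hy)]
  · exact isOpen_lt continuous_const (by fun_prop)
  · exact convex_halfSpace_gt (f := fun y => ⟪e, y⟫) (innerSL ℝ e).toLinearMap.isLinear 0
  · rintro y ⟨hy, -⟩
    rw [hHx y hy]
    constructor
    · intro hyΩ
      have : h y ∈ (h '' U) ∩ {y : E | 0 < ⟪e, y⟫} := by
        rw [← hm]; exact ⟨y, ⟨hy, hyΩ⟩, rfl⟩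
      exact this.2
    · intro hp
      have : h y ∈ h '' (U ∩ Ω) := by
        rw [hm]; exact ⟨⟨y, hy, rfl⟩, hp⟩
      obtain ⟨y', ⟨h1, h2⟩, h3⟩ := this
      have : y' = y := by rw [← hl y' h1, h3, hl y hy]
      exact this ▸ h2
  · intro z hz s hs
    have hz' : 0 ≤ ⟪e, z⟫ := by
      have hcl : IsClosed {y : E | 0 ≤ ⟪e, y⟫} := isClosed_le continuous_const (by fun_prop)
      exact closure_minimal (fun y (hy : 0 < ⟪e, y⟫) => hy.le) hcl hz
    show 0 < ⟪e, z + s • e⟫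
    rw [inner_add_right, inner_smul_right, real_inner_self_eq_norm_sq, he]
    linarith

section
variable {E : Type*} [NormedAddCommGroup E] [InnerProductSpace ℝ E]
    [FiniteDimensional ℝ E] [MeasurableSpace E] [BorelSpace E] (μ : Measure E)
    [μ.IsAddHaarMeasure]

theorem lip_map_le {f g : E → E} {K : ℝ≥0} (hf : Measurable f) (hg : LipschitzWith K g)
    {A Q : Set E} (hA : MeasurableSet A)
    (hm : MapsTo f A Q) (hl : ∀ y ∈ A, g (f y) = y) :
    Measure.map f (μ.restrict A) ≤ ((K:ℝ≥0∞)^(Module.finrank ℝ E)) • μ.restrict Q := by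
  refine Measure.le_iff.2 fun s hs => ?_
  rw [Measure.map_apply hf hs, Measure.restrict_apply (hf hs), Measure.smul_apply,
    Measure.restrict_apply hs, smul_eq_mul]
  calc μ (f ⁻¹' s ∩ A) ≤ μ (g '' (s ∩ Q)) := by
        refine measure_mono ?_
        rintro y ⟨h1, h2⟩
        exact ⟨f y, ⟨h1, hm h2⟩, hl y h2⟩
    _ ≤ _ := lip_image_measure_le μ hg.lipschitzOnWith

theorem eLpNorm_comp_le_of_map_le {F : Type*} [NormedAddCommGroup F] {p : ℝ≥0∞} (hp1 : 1 ≤ p)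
    (hp : p ≠ ∞) {C : ℝ≥0∞} {f : E → E} {m m' : Measure E} (hf : Measurable f)
    (h : Measure.map f m ≤ C • m') {v : E → F} (hv : AEStronglyMeasurable v m') :
    eLpNorm (v ∘ f) p m ≤ max 1 C * eLpNorm v p m' := by
  have hac : Measure.map f m ≪ m' := (Measure.absolutelyContinuous_of_le h).trans
    (Measure.smul_absolutelyContinuous)
  have hv' := hv.mono_ac hac
  rw [← eLpNorm_map_measure hv' hf.aemeasurable]
  have h' : Measure.map f m ≤ (max 1 C) • m' := by
    refine h.trans (Measure.le_iff.2 fun s _ => ?_)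
    simp only [Measure.smul_apply, smul_eq_mul]
    gcongr
    exact le_max_right _ _
  refine (eLpNorm_mono_measure v h').trans ?_
  have h0 : max 1 C ≠ 0 := by
    have : (1:ℝ≥0∞) ≤ max 1 C := le_max_left _ _
    intro h; simp [h] at this
  rw [eLpNorm_smul_measure_of_ne_zero h0, smul_eq_mul]
  gcongr
  have hp0 : 1 ≤ p.toReal := by
    rw [← ENNReal.toReal_one]; exact ENNReal.toReal_mono hp hp1
  calc (max 1 C) ^ (1 / p).toReal ≤ (max 1 C) ^ (1:ℝ) := by
        apply ENNReal.rpow_le_rpow_of_exponent_le (le_max_left _ _)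
        rw [ENNReal.toReal_div, ENNReal.toReal_one]
        exact (div_le_one (by linarith)).2 hp0
    _ = _ := by simp
end

open MeasureTheory Filter Topology Set
open scoped ENNReal RealInnerProductSpace NNReal

section
variable {E : Type*} [NormedAddCommGroup E] [InnerProductSpace ℝ E]
    [FiniteDimensional ℝ E] [MeasurableSpace E] [BorelSpace E] (μ : Measure E)
    [μ.IsAddHaarMeasure] {F : Type*} [NormedAddCommGroup F] [NormedSpace ℝ F]

theorem transl_cont {p : ℝ≥0∞} (hp1 : 1 ≤ p) (hp : p ≠ ∞) {v : E → F} (hv : MemLp v p μ) :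
    Tendsto (fun h : E => eLpNorm (fun x => v (h + x) - v x) p μ) (𝓝 0) (𝓝 0) := by
  haveI : Fact (1 ≤ p) := ⟨hp1⟩
  haveI : Fact (p ≠ ∞) := ⟨hp⟩
  have hc : Continuous (fun h : E => (DomAddAct.mk h) +ᵥ (hv.toLp v)) := by
    have : Continuous (fun h : E => DomAddAct.mk h) := DomAddAct.continuous_mk
    exact this.vadd continuous_const
  have h1 := (hc.tendsto 0).edist (tendsto_const_nhds (x := hv.toLp v))
  have h0 : (DomAddAct.mk (0:E)) +ᵥ (hv.toLp v) = hv.toLp v := by simp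
  rw [h0, edist_self] at h1
  refine h1.congr fun h => ?_
  rw [DomAddAct.mk_vadd_toLp, Lp.edist_toLp_toLp]
  rfl

variable {μ} in
theorem memLp_locInt {p : ℝ≥0∞} (hp1 : 1 ≤ p) {v : E → F} (hv : MemLp v p μ) :
    LocallyIntegrable v μ := hv.locallyIntegrable hp1

/-- mollification -/
noncomputable def molly (μ : Measure E) (ρ : E → ℝ) (v : E → F) (x : E) : F :=
  ∫ z, ρ (x - z) • v z ∂μ

theorem molly_aux_sm [CompleteSpace F] {p : ℝ≥0∞} (hp1 : 1 ≤ p) (hp : p ≠ ∞) {v : E → F} (hv : MemLp v p μ)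
    (hvm : StronglyMeasurable v) {ρ : E → ℝ} (hρc : Continuous ρ) (hρs : HasCompactSupport ρ)
    (hρ0 : ∀ x, 0 ≤ ρ x) (hρ1 : ∫ x, ρ x ∂μ = 1) {S : ℝ≥0∞}
    (hS : ∀ h, ρ h ≠ 0 → eLpNorm (fun x => v (-h + x) - v x) p μ ≤ S) :
    eLpNorm (fun x => molly μ ρ v x - v x) p μ ≤ S := by
  have hp0 : p ≠ 0 := by intro h; simp [h] at hp1
  have hpr : 0 < p.toReal := ENNReal.toReal_pos hp0 hp
  have hρi : Integrable ρ μ := hρc.integrable_of_hasCompactSupport hρs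
  set ν : Measure E := μ.withDensity (fun x => ENNReal.ofReal (ρ x)) with hν
  have hρm : Measurable (fun x => ENNReal.ofReal (ρ x)) := by fun_prop
  haveI : IsProbabilityMeasure ν := by
    constructor
    rw [hν, withDensity_apply _ MeasurableSet.univ, Measure.restrict_univ,
      ← ofReal_integral_eq_lintegral_ofReal hρi (ae_of_all _ hρ0), hρ1, ENNReal.ofReal_one]
  have hvl := memLp_locInt hp1 hv
  have hpt : ∀ x, molly μ ρ v x - v x = ∫ h, ρ h • (v (-h + x) - v x) ∂μ := by
    intro x
    have e1 : molly μ ρ v x = ∫ h, ρ h • v (-h + x) ∂μ := by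
      rw [molly, ← integral_sub_left_eq_self (fun z => ρ (x - z) • v z) μ x]
      congr 1; ext h; simp [sub_eq_neg_add]
    have hvl2 : LocallyIntegrable (fun h => v (-h + x)) μ := by
      have : MemLp (fun h => v (-h + x)) p μ := by
        have h2 := hv.comp_measurePreserving (Measure.measurePreserving_sub_left μ x)
        have h3 : (v ∘ fun t => x - t) = fun h => v (-h + x) := by
          ext h; simp [sub_eq_neg_add]
        rwa [h3] at h2
      exact memLp_locInt hp1 this
    have i1 : Integrable (fun h => ρ h • v (-h + x)) μ :=
      hvl2.integrable_smul_left_of_hasCompactSupport hρc hρs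
    have i2 : Integrable (fun h => ρ h • v x) μ := hρi.smul_const _
    rw [e1]
    simp_rw [smul_sub]
    rw [integral_sub i1 i2, integral_smul_const, hρ1, one_smul]
  have hjm : StronglyMeasurable (fun q : E × E => v (-q.2 + q.1) - v q.1) := by
    refine (hvm.comp_measurable (by fun_prop)).sub (hvm.comp_measurable (by fun_prop))
  have hb : ∀ x, ‖molly μ ρ v x - v x‖ₑ ^ p.toReal ≤ ∫⁻ h, ‖v (-h + x) - v x‖ₑ ^ p.toReal ∂ν := by
    intro x
    have hsm : StronglyMeasurable (fun h => v (-h + x) - v x) :=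
      hjm.comp_measurable (g := fun h => (x, h)) (by fun_prop)
    have a1 : ‖molly μ ρ v x - v x‖ₑ ≤ eLpNorm (fun h => v (-h + x) - v x) 1 ν := by
      rw [hpt, eLpNorm_one_eq_lintegral_enorm, hν, lintegral_withDensity_eq_lintegral_mul _ hρm hsm.enorm]
      refine (enorm_integral_le_lintegral_enorm _).trans (lintegral_mono fun h => ?_)
      simp only [Pi.mul_apply]
      rw [enorm_smul, Real.enorm_eq_ofReal (hρ0 h)]
    have a2 := a1.trans (eLpNorm_le_eLpNorm_of_exponent_le hp1 hsm.aestronglyMeasurable)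
    rw [eLpNorm_eq_lintegral_rpow_enorm_toReal hp0 hp] at a2
    calc _ ≤ _ := ENNReal.rpow_le_rpow a2 hpr.le
      _ = _ := by
        rw [← ENNReal.rpow_mul, one_div, inv_mul_cancel₀ hpr.ne', ENNReal.rpow_one]
  have hswap : ∫⁻ x, ‖molly μ ρ v x - v x‖ₑ ^ p.toReal ∂μ ≤ S ^ p.toReal := by
    calc _ ≤ ∫⁻ x, ∫⁻ h, ‖v (-h + x) - v x‖ₑ ^ p.toReal ∂ν ∂μ := lintegral_mono hb
      _ = ∫⁻ h, ∫⁻ x, ‖v (-h + x) - v x‖ₑ ^ p.toReal ∂μ ∂ν := 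
          lintegral_lintegral_swap (hjm.enorm.pow_const _).aemeasurable
      _ ≤ ∫⁻ h, S ^ p.toReal ∂ν := by
          refine lintegral_mono_ae ?_
          rw [hν, ae_withDensity_iff hρm]
          refine ae_of_all _ fun h hh => ?_
          have : ρ h ≠ 0 := by intro h0; simp [h0] at hh
          have h2 := hS h this
          rw [eLpNorm_eq_lintegral_rpow_enorm_toReal hp0 hp] at h2
          have h3 := ENNReal.rpow_le_rpow h2 hpr.le
          rwa [← ENNReal.rpow_mul, one_div, inv_mul_cancel₀ hpr.ne', ENNReal.rpow_one] at h3
      _ = _ := by simp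
  rw [eLpNorm_eq_lintegral_rpow_enorm_toReal hp0 hp]
  calc _ ≤ _ := ENNReal.rpow_le_rpow hswap (by positivity)
    _ = S := by rw [← ENNReal.rpow_mul, one_div, mul_inv_cancel₀ hpr.ne', ENNReal.rpow_one]

theorem molly_aux [CompleteSpace F] {p : ℝ≥0∞} (hp1 : 1 ≤ p) (hp : p ≠ ∞) {v : E → F} (hv : MemLp v p μ)
    {ρ : E → ℝ} (hρc : Continuous ρ) (hρs : HasCompactSupport ρ)
    (hρ0 : ∀ x, 0 ≤ ρ x) (hρ1 : ∫ x, ρ x ∂μ = 1) {S : ℝ≥0∞}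
    (hS : ∀ h, ρ h ≠ 0 → eLpNorm (fun x => v (-h + x) - v x) p μ ≤ S) :
    eLpNorm (fun x => molly μ ρ v x - v x) p μ ≤ S := by
  obtain ⟨v', hv'm, hv'⟩ := hv.1
  have h1 : MemLp v' p μ := hv.ae_eq hv'
  have h2 : ∀ x, molly μ ρ v x = molly μ ρ v' x := fun x => by
    refine integral_congr_ae ?_
    filter_upwards [hv'] with z hz
    rw [hz]
  have h3 := molly_aux_sm μ hp1 hp h1 hv'm hρc hρs hρ0 hρ1 (S := S) (fun h hh => by
    refine le_of_eq_of_le (eLpNorm_congr_ae ?_) (hS h hh)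
    have h4 := (measurePreserving_add_left μ (-h)).quasiMeasurePreserving.ae_eq_comp hv'
    filter_upwards [hv', h4] with z hz hz2
    simp only [Function.comp] at hz2
    rw [hz, hz2])
  refine le_of_eq_of_le (eLpNorm_congr_ae ?_) h3
  filter_upwards [hv'] with z hz
  rw [hz, h2]

noncomputable def cut (Ω : Set E) (v : E → F) : E → F := Ω.indicator v

theorem cut_mem {Ω : Set E} {v : E → F} {x : E} (hx : x ∈ Ω) : cut Ω v x = v x :=
  indicator_of_mem hx v

theorem cut_nmem {Ω : Set E} {v : E → F} {x : E} (hx : x ∉ Ω) : cut Ω v x = 0 :=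
  indicator_of_notMem hx v

theorem cut_integrable {Ω : Set E} (hΩ : MeasurableSet Ω) {v : E → F} (hv : IntegrableOn v Ω μ) :
    Integrable (cut Ω v) μ := (integrable_indicator_iff hΩ).2 hv

theorem cut_memLp {p : ℝ≥0∞} {Ω : Set E} (hΩ : MeasurableSet Ω) {v : E → F}
    (hv : MemLp v p (μ.restrict Ω)) :
    MemLp (cut Ω v) p μ := (memLp_indicator_iff_restrict hΩ).2 hv

theorem molly_hasFDerivAt {v : E → ℝ} (hv : LocallyIntegrable v μ)
    {ρ : E → ℝ} (hρc : ContDiff ℝ 1 ρ) (hρs : HasCompactSupport ρ) (x : E) :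
    HasFDerivAt (molly μ ρ v) (∫ z, v z • fderiv ℝ ρ (x - z) ∂μ) x := by
  have := HasCompactSupport.hasFDerivAt_convolution_right (ContinuousLinearMap.lsmul ℝ ℝ) hρs hv hρc x
  have e : convolution v ρ (ContinuousLinearMap.lsmul ℝ ℝ) μ = molly μ ρ v := by
    ext y
    simp [molly, convolution, mul_comm]
  rw [e] at this
  exact this

theorem molly_lip {v : E → ℝ} (hv : Integrable v μ)
    {ρ : E → ℝ} (hρc : ContDiff ℝ 1 ρ) (hρs : HasCompactSupport ρ) :
    ∃ K, LipschitzWith K (molly μ ρ v) := by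
  obtain ⟨C, hC⟩ := hρc.lipschitzWith_of_hasCompactSupport hρs (by simp)
  have hint : ∀ x, Integrable (fun z => ρ (x - z) • v z) μ := by
    intro x
    obtain ⟨B, hB⟩ := hρs.exists_bound_of_continuous hρc.continuous
    exact hv.bdd_smul (φ := fun z => ρ (x - z)) B (by
      have := hρc.continuous
      exact Continuous.aestronglyMeasurable (by fun_prop)) (ae_of_all _ fun z => hB _)
  refine ⟨C * (∫ z, ‖v z‖ ∂μ).toNNReal, LipschitzWith.of_dist_le_mul fun x y => ?_⟩
  rw [dist_eq_norm, molly, molly, ← integral_sub (hint x) (hint y)]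
  have h0 : 0 ≤ ∫ z, ‖v z‖ ∂μ := integral_nonneg fun _ => norm_nonneg _
  calc _ ≤ ∫ z, (C * dist x y) * ‖v z‖ ∂μ := by
        refine norm_integral_le_of_norm_le (hv.norm.const_mul _) (ae_of_all _ fun z => ?_)
        rw [← sub_smul, norm_smul]
        gcongr
        have := hC.dist_le_mul (x - z) (y - z)
        rwa [dist_eq_norm, dist_sub_right] at this
    _ = _ := by
        rw [integral_const_mul]
        push_cast
        rw [Real.coe_toNNReal _ h0]
        ring

/-- weak derivative, coordinate free. -/
def WeakD (μ : Measure E) (Ω : Set E) (u : E → ℝ) (G : E → E →L[ℝ] ℝ) : Prop :=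
  ∀ φ : E → ℝ, ContDiff ℝ 1 φ → HasCompactSupport φ → tsupport φ ⊆ Ω → ∀ v : E,
    ∫ x in Ω, u x * fderiv ℝ φ x v ∂μ = - ∫ x in Ω, G x v * φ x ∂μ

theorem molly_fderiv {Ω : Set E} (hΩ : MeasurableSet Ω) {u : E → ℝ} {G : E → E →L[ℝ] ℝ}
    (hu : IntegrableOn u Ω μ) (hG : IntegrableOn G Ω μ) (hw : WeakD μ Ω u G)
    {ρ : E → ℝ} (hρc : ContDiff ℝ 1 ρ) (hρs : HasCompactSupport ρ) {δ : ℝ}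
    (hρt : tsupport ρ ⊆ Metric.closedBall 0 δ) {x : E} (hx : Metric.closedBall x δ ⊆ Ω) :
    fderiv ℝ (molly μ ρ (cut Ω u)) x = molly μ ρ (cut Ω G) x := by
  have hu' : Integrable (cut Ω u) μ := cut_integrable μ hΩ hu
  have hG' : Integrable (cut Ω G) μ := cut_integrable μ hΩ hG
  rw [(molly_hasFDerivAt μ hu'.locallyIntegrable hρc hρs x).fderiv]
  have hcf : Continuous (fderiv ℝ ρ) := hρc.continuous_fderiv one_ne_zero
  obtain ⟨B, hB⟩ := hρs.exists_bound_of_continuous hρc.continuous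
  obtain ⟨B', hB'⟩ := (hρs.fderiv ℝ).exists_bound_of_continuous hcf
  have hρcc := hρc.continuous
  have i1 : Integrable (fun z => cut Ω u z • fderiv ℝ ρ (x - z)) μ :=
    hu'.smul_bdd (f := fun z => fderiv ℝ ρ (x - z)) B' (Continuous.aestronglyMeasurable (by fun_prop)) (ae_of_all _ fun z => hB' _)
  have i2 : Integrable (fun z => ρ (x - z) • cut Ω G z) μ :=
    hG'.bdd_smul (φ := fun z => ρ (x - z)) B (Continuous.aestronglyMeasurable (by fun_prop)) (ae_of_all _ fun z => hB _)
  ext v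
  rw [molly, ContinuousLinearMap.integral_apply i1, ContinuousLinearMap.integral_apply i2]
  set φ : E → ℝ := fun z => ρ (x - z) with hφ
  have hφc : ContDiff ℝ 1 φ := hρc.comp (contDiff_const.sub contDiff_id)
  have hφs : HasCompactSupport φ := hρs.comp_homeomorph (Homeomorph.subLeft x)
  have hφt : tsupport φ ⊆ Ω := by
    have h1 : tsupport φ ⊆ Metric.closedBall x δ := by
      refine closure_minimal (fun z hz => ?_) Metric.isClosed_closedBall
      have : x - z ∈ Metric.closedBall (0:E) δ := hρt (subset_tsupport _ hz)
      rw [mem_closedBall_zero_iff] at this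
      rwa [Metric.mem_closedBall, dist_comm, dist_eq_norm]
    exact h1.trans hx
  have key := hw φ hφc hφs hφt v
  have hd : ∀ z, fderiv ℝ φ z v = - fderiv ℝ ρ (x - z) v := by
    intro z
    have h1 : HasFDerivAt ρ (fderiv ℝ ρ (x - z)) (x - z) :=
      (hρc.differentiable one_ne_zero).differentiableAt.hasFDerivAt
    have h2 : HasFDerivAt (fun z : E => x - z) (-ContinuousLinearMap.id ℝ E) z :=
      (hasFDerivAt_id z).const_sub x
    have h3 : HasFDerivAt φ _ z := h1.comp z h2
    rw [h3.fderiv]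
    simp
  have e1 : ∫ z, (cut Ω u z • fderiv ℝ ρ (x - z)) v ∂μ = - ∫ x in Ω, u x * fderiv ℝ φ x v ∂μ := by
    rw [← integral_neg, ← integral_indicator hΩ]
    congr 1; ext z
    by_cases hz : z ∈ Ω <;> simp [cut_mem, cut_nmem, hz, hd]
  have e2 : ∫ z, (ρ (x - z) • cut Ω G z) v ∂μ = ∫ x in Ω, G x v * φ x ∂μ := by
    rw [← integral_indicator hΩ]
    congr 1; ext z
    by_cases hz : z ∈ Ω <;> simp [cut_mem, cut_nmem, hz, hφ, mul_comm]
  rw [e1, e2, key, neg_neg]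

theorem exists_smooth_approx {Ω : Set E} (hΩ : MeasurableSet Ω) {u : E → ℝ} {G : E → E →L[ℝ] ℝ}
    {p : ℝ≥0∞} (hp1 : 1 ≤ p) (hp : p ≠ ∞)
    (hu : IntegrableOn u Ω μ) (hG : IntegrableOn G Ω μ)
    (hup : MemLp u p (μ.restrict Ω)) (hGp : MemLp G p (μ.restrict Ω)) (hw : WeakD μ Ω u G)
    {V : Set E} (hV : MeasurableSet V) {δ : ℝ} (hδ : 0 < δ) (hVΩ : ∀ x ∈ V, Metric.closedBall x δ ⊆ Ω)
    {ε : ℝ≥0∞} (hε : ε ≠ 0) :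
    ∃ (w : E → ℝ) (K : ℝ≥0), LipschitzWith K w ∧ Differentiable ℝ w ∧
      eLpNorm (fun x => w x - u x) p (μ.restrict Ω) ≤ ε ∧
      eLpNorm (fun x => fderiv ℝ w x - G x) p (μ.restrict V) ≤ ε := by
  have hu1 : MemLp (cut Ω u) p μ := cut_memLp μ hΩ hup
  have hG1 : MemLp (cut Ω G) p μ := cut_memLp μ hΩ hGp
  have hpos : (0:ℝ≥0∞) < ε := pos_iff_ne_zero.2 hε
  have t1 := (transl_cont μ hp1 hp hu1).eventually (Iic_mem_nhds hpos)
  have t2 := (transl_cont μ hp1 hp hG1).eventually (Iic_mem_nhds hpos)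
  obtain ⟨η, hη, hη2⟩ := Metric.eventually_nhds_iff.1 (t1.and t2)
  have hm : 0 < min (η / 2) δ := by positivity
  let b : ContDiffBump (0:E) := ⟨min (η / 2) δ / 2, min (η / 2) δ, by positivity, by linarith⟩
  set ρ := b.normed μ with hρ
  have hρc : ContDiff ℝ 1 ρ := b.contDiff_normed
  have hρs : HasCompactSupport ρ := b.hasCompactSupport_normed
  have hρt : tsupport ρ ⊆ Metric.closedBall 0 δ := by
    rw [hρ, b.tsupport_normed_eq]
    exact Metric.closedBall_subset_closedBall (min_le_right _ _)
  have hρη : ∀ h, ρ h ≠ 0 → dist (-h) 0 < η := by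
    intro h hh
    have : h ∈ tsupport ρ := subset_tsupport _ hh
    rw [hρ, b.tsupport_normed_eq, mem_closedBall_zero_iff] at this
    rw [dist_zero_right, norm_neg]
    have h3 : b.rOut ≤ η / 2 := min_le_left _ _
    linarith
  have hu' : Integrable (cut Ω u) μ := cut_integrable μ hΩ hu
  obtain ⟨K, hK⟩ := molly_lip μ hu' hρc hρs
  refine ⟨molly μ ρ (cut Ω u), K, hK, fun x =>
    (molly_hasFDerivAt μ hu'.locallyIntegrable hρc hρs x).differentiableAt, ?_, ?_⟩
  · have h1 := molly_aux μ hp1 hp hu1 hρc.continuous hρs b.nonneg_normed b.integral_normed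
      (fun h hh => (hη2 (hρη h hh)).1)
    refine le_trans ?_ h1
    refine le_trans (le_of_eq (eLpNorm_congr_ae ?_)) (eLpNorm_restrict_le _ p μ Ω)
    filter_upwards [ae_restrict_mem hΩ] with x hx
    simp [cut_mem, hx]
  · have h1 := molly_aux μ hp1 hp hG1 hρc.continuous hρs b.nonneg_normed b.integral_normed
      (fun h hh => (hη2 (hρη h hh)).2)
    refine le_trans ?_ h1
    refine le_trans (le_of_eq (eLpNorm_congr_ae ?_)) (eLpNorm_restrict_le _ p μ V)
    filter_upwards [ae_restrict_mem hV] with x hx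
    have hxΩ : x ∈ Ω := hVΩ x hx (Metric.mem_closedBall_self hδ.le)
    rw [molly_fderiv μ hΩ hu hG hw hρc hρs hρt (hVΩ x hx)]
    simp [cut_mem, hxΩ]
end

open MeasureTheory Filter Topology Set
open scoped ENNReal RealInnerProductSpace NNReal

section
variable {E : Type*} [NormedAddCommGroup E] [InnerProductSpace ℝ E]
    [FiniteDimensional ℝ E] [MeasurableSpace E] [BorelSpace E] (μ : Measure E)
    [μ.IsAddHaarMeasure] {F : Type*} [NormedAddCommGroup F] [NormedSpace ℝ F]

theorem memLp_comp_of_map_le {F : Type*} [NormedAddCommGroup F] {p : ℝ≥0∞} (hp1 : 1 ≤ p)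
    (hp : p ≠ ∞) {C : ℝ≥0∞} (hC : C ≠ ∞) {f : E → E} {m m' : Measure E} (hf : Measurable f)
    (h : Measure.map f m ≤ C • m') {v : E → F} (hv : MemLp v p m') :
    MemLp (v ∘ f) p m := by
  have hac : Measure.map f m ≪ m' := (Measure.absolutelyContinuous_of_le h).trans
    (Measure.smul_absolutelyContinuous)
  refine ⟨(hv.1.mono_ac hac).comp_measurable hf, ?_⟩
  refine (eLpNorm_comp_le_of_map_le hp1 hp hf h hv.1).trans_lt ?_
  exact ENNReal.mul_lt_top (max_lt ENNReal.one_lt_top hC.lt_top) hv.2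

theorem ae_comp_of_map_le {C : ℝ≥0∞} {f : E → E} {m m' : Measure E} (hf : Measurable f)
    (h : Measure.map f m ≤ C • m') {q : E → Prop} (hq : ∀ᵐ x ∂m', q x) : ∀ᵐ x ∂m, q (f x) := by
  have hac : Measure.map f m ≪ m' := (Measure.absolutelyContinuous_of_le h).trans
    (Measure.smul_absolutelyContinuous)
  exact ae_of_ae_map hf.aemeasurable (hac.ae_le hq)

def LPatch.V {Ω : Set E} {x : E} (pt : LPatch Ω x) : Set E :=
  pt.U ∩ pt.H ⁻¹' Metric.ball (pt.H x) pt.r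

theorem LPatch.isOpen_V {Ω : Set E} {x : E} (pt : LPatch Ω x) : IsOpen pt.V :=
  pt.openU.inter (Metric.isOpen_ball.preimage pt.lipH.continuous)

theorem LPatch.mem_V {Ω : Set E} {x : E} (pt : LPatch Ω x) : x ∈ pt.V :=
  ⟨pt.xU, by simp [pt.hr]⟩

theorem LPatch.bdd_V {Ω : Set E} {x : E} (pt : LPatch Ω x) : Bornology.IsBounded pt.V := by
  refine (pt.lipHi.isBounded_image (Metric.isBounded_ball (x := pt.H x) (r := pt.r))).subset ?_
  intro y hy
  exact ⟨pt.H y, hy.2, pt.left y hy.1⟩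

theorem sm_fderiv (f : E → E) : StronglyMeasurable (fderiv ℝ f) := by
  exact (measurable_fderiv ℝ f).stronglyMeasurable

theorem sm_fderiv' (f : E → ℝ) : StronglyMeasurable (fderiv ℝ f) := by
  exact (measurable_fderiv ℝ f).stronglyMeasurable

theorem patch_pull_memLp {Ω : Set E} (hΩ : IsOpen Ω) {x : E} (pt : LPatch Ω x)
    {p : ℝ≥0∞} (hp1 : 1 ≤ p) (hp : p ≠ ∞) {v : E → F} (hv : MemLp v p (μ.restrict Ω)) :
    MemLp (v ∘ pt.Hi) p (μ.restrict (Metric.ball (pt.H x) (2 * pt.r) ∩ pt.P)) := by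
  refine memLp_comp_of_map_le hp1 hp (C := ((pt.K:ℝ≥0∞)^(Module.finrank ℝ E))) (by finiteness)
    pt.lipHi.continuous.measurable ?_ hv
  refine lip_map_le μ pt.lipHi.continuous.measurable pt.lipH 
    (Metric.isOpen_ball.inter pt.openP).measurableSet ?_ ?_
  · rintro z ⟨h1, h2⟩
    have := pt.mapsHi h1
    rw [pt.mem _ this, pt.right z h1]
    exact h2
  · rintro z ⟨h1, h2⟩
    exact pt.right z h1

theorem memLp_comp_fderiv {m : Measure E} {p : ℝ≥0∞} {G : E → E →L[ℝ] ℝ} (hG : MemLp G p m)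
    {f : E → E} {K : ℝ≥0} (hf : LipschitzWith K f) :
    MemLp (fun z => (G z).comp (fderiv ℝ f z)) p m := by
  refine MemLp.of_le_mul (c := K) hG ?_ (ae_of_all _ fun z => ?_)
  · have h2 : AEStronglyMeasurable (fderiv ℝ f) m := (sm_fderiv f).aestronglyMeasurable
    exact (ContinuousLinearMap.compL ℝ E E ℝ).aestronglyMeasurable_comp₂ hG.1 h2
  · refine (ContinuousLinearMap.opNorm_comp_le _ _).trans ?_
    rw [mul_comm]
    gcongr
    exact norm_fderiv_le_of_lipschitz ℝ hf

theorem patch_approx {Ω : Set E} (hΩ : IsOpen Ω) {x : E} (pt : LPatch Ω x)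
    {u : E → ℝ} {G : E → E →L[ℝ] ℝ}
    {p : ℝ≥0∞} (hp1 : 1 ≤ p) (hp : p ≠ ∞)
    (hu : IntegrableOn u Ω μ) (hG : IntegrableOn G Ω μ)
    (hup : MemLp u p (μ.restrict Ω)) (hGp : MemLp G p (μ.restrict Ω)) (hw : WeakD μ Ω u G)
    {ε : ℝ≥0∞} (hε : ε ≠ 0) :
    ∃ (w : E → ℝ) (K : ℝ≥0), LipschitzWith K w ∧
      eLpNorm (fun x => w x - u x) p (μ.restrict (pt.V ∩ Ω)) ≤ ε ∧
      eLpNorm (fun x => fderiv ℝ w x - G x) p (μ.restrict (pt.V ∩ Ω)) ≤ ε := by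
  set K := pt.K
  set d := Module.finrank ℝ E
  set z0 := pt.H x with hz0
  set r := pt.r
  have hr : 0 < r := pt.hr
  set Q2 := Metric.ball z0 (2 * r) ∩ pt.P with hQ2
  set A := pt.V ∩ Ω with hA
  have hAm : MeasurableSet A := (pt.isOpen_V.inter hΩ).measurableSet
  have hQ2m : MeasurableSet Q2 := (Metric.isOpen_ball.inter pt.openP).measurableSet
  have hHim := pt.lipHi.continuous.measurable
  have hHm := pt.lipH.continuous.measurable
  set C1 : ℝ≥0∞ := max 1 (((K * K : ℝ≥0) : ℝ≥0∞) ^ d) with hC1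
  set C2 : ℝ≥0∞ := max 1 ((K : ℝ≥0∞) ^ d) with hC2
  have hC1f : C1 ≠ ∞ := (max_lt ENNReal.one_lt_top (by finiteness)).ne
  have hC2f : C2 ≠ ∞ := (max_lt ENNReal.one_lt_top (by finiteness)).ne
  have hC1o : 1 ≤ C1 := le_max_left _ _
  set T : ℝ≥0∞ := (1 + K + K * K) * (C1 + C2) with hT
  have hTf : T ≠ ∞ := by rw [hT]; finiteness
  set ε0 := ε / T with hε0
  have hε0' : ε0 ≠ 0 := ENNReal.div_ne_zero.2 ⟨hε, hTf⟩
  have hTε : T * ε0 ≤ ε := ENNReal.mul_div_le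
  -- pulled back functions
  set ut := cut Q2 (u ∘ pt.Hi) with hut
  set Gt := cut Q2 (fun z => (G (pt.Hi z)).comp (fderiv ℝ pt.Hi z)) with hGt
  have hutp : MemLp ut p μ := cut_memLp μ hQ2m (patch_pull_memLp μ hΩ pt hp1 hp hup)
  have hGtp : MemLp Gt p μ := cut_memLp μ hQ2m 
    (memLp_comp_fderiv (patch_pull_memLp μ hΩ pt hp1 hp hGp) pt.lipHi)
  have hpos : (0:ℝ≥0∞) < ε0 := pos_iff_ne_zero.2 hε0'
  have t1 := (transl_cont μ hp1 hp hutp).eventually (Iic_mem_nhds hpos)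
  have t2 := (transl_cont μ hp1 hp hGtp).eventually (Iic_mem_nhds hpos)
  obtain ⟨η, hη, hη2⟩ := Metric.eventually_nhds_iff.1 (t1.and t2)
  set s := min (η / 2) (r / 2) with hs
  have hs0 : 0 < s := by positivity
  set a := s • pt.e with ha
  have han : ‖a‖ ≤ s := by
    rw [ha, norm_smul, Real.norm_of_nonneg hs0.le]
    exact mul_le_of_le_one_right hs0.le pt.e_le
  have haη : dist a 0 < η := by
    rw [dist_zero_right]
    have : s ≤ η / 2 := min_le_left _ _
    linarith
  obtain ⟨e1, e2⟩ := hη2 haη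
  have har : ‖a‖ ≤ r / 2 := han.trans (min_le_right _ _)
  -- the compact set
  set V : Set E := pt.Hi '' (Metric.closedBall z0 (3 / 2 * r) ∩ (fun z => a + z) '' closure pt.P) with hV
  have hVc : IsCompact V := by
    refine IsCompact.image ?_ pt.lipHi.continuous
    exact (isCompact_closedBall _ _).inter_right
      ((Homeomorph.addLeft a).isClosedMap _ isClosed_closure)
  have hshift : ∀ z ∈ closure pt.P, a + z ∈ pt.P := by
    intro z hz
    rw [add_comm]; exact pt.shift z hz s hs0
  have hcb : Metric.closedBall z0 (3 / 2 * r) ⊆ Metric.ball z0 (2 * r) := 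
    Metric.closedBall_subset_ball (by linarith)
  have hVΩ : V ⊆ Ω := by
    rintro _ ⟨z, ⟨h1, z', h2, rfl⟩, rfl⟩
    have h3 := hcb h1
    rw [pt.mem _ (pt.mapsHi h3), pt.right _ h3]
    exact hshift z' h2
  obtain ⟨δ, hδ, hδ2⟩ := hVc.exists_cthickening_subset_open hΩ hVΩ
  obtain ⟨w, Kw, hwL, hwd, hw1, hw2⟩ := exists_smooth_approx μ hΩ.measurableSet hp1 hp hu hG hup hGp hw
    hVc.measurableSet hδ (fun y hy => (Metric.closedBall_subset_cthickening hy δ).trans hδ2) hε0'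
  set Φ : E → E := fun y => pt.Hi (a + pt.H y) with hΦ
  have hΦm : Measurable Φ := hHim.comp (measurable_const.add hHm)
  have hAU : ∀ y ∈ A, y ∈ pt.U := fun y hy => hy.1.1
  have hAP : ∀ y ∈ A, pt.H y ∈ pt.P := fun y hy => (pt.mem y (hAU y hy)).1 hy.2
  have hAB : ∀ y ∈ A, pt.H y ∈ Metric.ball z0 r := fun y hy => hy.1.2
  have hA32 : ∀ y ∈ A, a + pt.H y ∈ Metric.closedBall z0 (3 / 2 * r) := by
    intro y hy
    have h1 := hAB y hy
    rw [Metric.mem_ball, dist_eq_norm] at h1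
    rw [Metric.mem_closedBall, dist_eq_norm, add_sub_assoc]
    refine (norm_add_le _ _).trans ?_
    linarith
  have hA2 : ∀ y ∈ A, a + pt.H y ∈ Metric.ball z0 (2 * r) := fun y hy => hcb (hA32 y hy)
  have hAs : ∀ y ∈ A, a + pt.H y ∈ pt.P := fun y hy => hshift _ (subset_closure (hAP y hy))
  have hAQ : ∀ y ∈ A, pt.H y ∈ Q2 := fun y hy => ⟨pt.mapsH (hAU y hy), hAP y hy⟩
  have hAQs : ∀ y ∈ A, a + pt.H y ∈ Q2 := fun y hy => ⟨hA2 y hy, hAs y hy⟩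
  have hΦV : MapsTo Φ A V := fun y hy => 
    ⟨_, ⟨hA32 y hy, _, subset_closure (hAP y hy), rfl⟩, rfl⟩
  have m1 : Measure.map Φ (μ.restrict A) ≤ (((K * K : ℝ≥0) : ℝ≥0∞) ^ d) • μ.restrict V := by
    refine lip_map_le μ (g := fun y => pt.Hi (-a + pt.H y)) hΦm ?_ hAm hΦV ?_
    · have : LipschitzWith K (fun y => -a + pt.H y) := by
        have := (LipschitzWith.const (α := E) (-a)).add pt.lipH
        simpa using this
      exact pt.lipHi.comp this
    · intro y hy
      simp only [hΦ]
      rw [pt.right _ (hA2 y hy), neg_add_cancel_left, pt.left y (hAU y hy)]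
  have m2 : Measure.map pt.H (μ.restrict A) ≤ ((K : ℝ≥0∞) ^ d) • μ := by
    have := lip_map_le μ (f := pt.H) (g := pt.Hi) (Q := univ) hHm pt.lipHi hAm (mapsTo_univ _ _)
      (fun y hy => pt.left y (hAU y hy))
    rwa [Measure.restrict_univ] at this
  have m3 : Measure.map (fun y => a + pt.H y) (μ.restrict A) ≤ ((K : ℝ≥0∞) ^ d) • μ := by
    have := lip_map_le μ (f := fun y => a + pt.H y) (g := fun z => pt.Hi (-a + z)) (K := K) (Q := univ) 
      (measurable_const.add hHm) ?_ hAm (mapsTo_univ _ _)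
      (fun y hy => by rw [neg_add_cancel_left, pt.left y (hAU y hy)])
    · rwa [Measure.restrict_univ] at this
    · have := pt.lipHi.comp ((LipschitzWith.const (α := E) (-a)).add LipschitzWith.id)
      simpa [Function.comp_def] using this
  have hΦL : ∃ K', LipschitzWith K' (w ∘ Φ) := 
    ⟨_, hwL.comp (pt.lipHi.comp ((LipschitzWith.const (α := E) a).add pt.lipH))⟩
  obtain ⟨K', hK'⟩ := hΦL
  have mVΩ : μ.restrict V ≤ μ.restrict Ω := Measure.restrict_mono hVΩ le_rfl
  refine ⟨w ∘ Φ, K', hK', ?_, ?_⟩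
  · have s1 : AEStronglyMeasurable (fun y => w y - u y) (μ.restrict V) :=
      hwL.continuous.aestronglyMeasurable.sub (hup.1.mono_measure mVΩ)
    have s2 : AEStronglyMeasurable (fun z => ut (a + z) - ut z) μ := by
      refine AEStronglyMeasurable.sub ?_ hutp.1
      exact hutp.1.comp_measurePreserving (measurePreserving_add_left μ a)
    have b1 := eLpNorm_comp_le_of_map_le hp1 hp hΦm m1 s1
    have b2 := eLpNorm_comp_le_of_map_le hp1 hp hHm m2 s2
    have hac1 : Measure.map Φ (μ.restrict A) ≪ μ.restrict V := 
      (Measure.absolutelyContinuous_of_le m1).trans Measure.smul_absolutelyContinuous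
    have hac2 : Measure.map pt.H (μ.restrict A) ≪ μ := 
      (Measure.absolutelyContinuous_of_le m2).trans Measure.smul_absolutelyContinuous
    have heq : (fun y => (w ∘ Φ) y - u y) =ᵐ[μ.restrict A]
        ((fun y => w y - u y) ∘ Φ) + ((fun z => ut (a + z) - ut z) ∘ pt.H) := by
      filter_upwards [ae_restrict_mem hAm] with y hy
      simp only [Function.comp, Pi.add_apply, hut]
      rw [cut_mem (hAQ y hy), cut_mem (hAQs y hy)]
      simp only [Function.comp, hΦ]
      rw [pt.left y (hAU y hy)]
      ring
    rw [eLpNorm_congr_ae heq]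
    refine (eLpNorm_add_le ((s1.mono_ac hac1).comp_measurable hΦm) 
      ((s2.mono_ac hac2).comp_measurable hHm) hp1).trans ?_
    refine le_trans (add_le_add b1 b2) ?_
    calc _ ≤ C1 * ε0 + C2 * ε0 := by
          gcongr
          exact (eLpNorm_mono_measure _ mVΩ).trans hw1
      _ = 1 * (C1 + C2) * ε0 := by ring
      _ ≤ T * ε0 := by rw [hT, add_assoc]; gcongr; exact le_self_add
      _ ≤ ε := hTε
  · have s1 : AEStronglyMeasurable (fun y => fderiv ℝ w y - G y) (μ.restrict V) :=
      (sm_fderiv' w).aestronglyMeasurable.sub (hGp.1.mono_measure mVΩ)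
    have s2 : AEStronglyMeasurable (fun z => Gt (a + z) - Gt z) μ := by
      refine AEStronglyMeasurable.sub ?_ hGtp.1
      exact hGtp.1.comp_measurePreserving (measurePreserving_add_left μ a)
    have b1 := eLpNorm_comp_le_of_map_le hp1 hp hΦm m1 s1
    have b2 := eLpNorm_comp_le_of_map_le hp1 hp hHm m2 s2
    have hac1 : Measure.map Φ (μ.restrict A) ≪ μ.restrict V := 
      (Measure.absolutelyContinuous_of_le m1).trans Measure.smul_absolutelyContinuous
    have hac2 : Measure.map pt.H (μ.restrict A) ≪ μ := 
      (Measure.absolutelyContinuous_of_le m2).trans Measure.smul_absolutelyContinuous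
    have s1' := ((s1.mono_ac hac1).comp_measurable hΦm)
    have s2' := ((s2.mono_ac hac2).comp_measurable hHm)
    have hdHi : ∀ᵐ z ∂μ, DifferentiableAt ℝ pt.Hi z := pt.lipHi.ae_differentiableAt
    have hdH : ∀ᵐ z ∂(μ.restrict A), DifferentiableAt ℝ pt.H z := 
      ae_restrict_of_ae pt.lipH.ae_differentiableAt
    have q1 := ae_comp_of_map_le hHm m2 hdHi
    have q2 := ae_comp_of_map_le (measurable_const.add hHm) m3 hdHi
    have hle : ∀ᵐ y ∂(μ.restrict A), ‖fderiv ℝ (w ∘ Φ) y - G y‖ ≤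
        ‖((K * K : ℝ) • (fun y => ‖((fun y => fderiv ℝ w y - G y) ∘ Φ) y‖)
          + (K : ℝ) • (fun y => ‖((fun z => Gt (a + z) - Gt z) ∘ pt.H) y‖)) y‖ := by
      filter_upwards [ae_restrict_mem hAm, hdH, q1, q2] with y hy d1 d2 d3
      have i1 : (fderiv ℝ pt.Hi (pt.H y)).comp (fderiv ℝ pt.H y) = ContinuousLinearMap.id ℝ E := by
        rw [← fderiv_comp y d2 d1]
        have : pt.Hi ∘ pt.H =ᶠ[𝓝 y] id := by
          filter_upwards [pt.openU.mem_nhds (hAU y hy)] with z hz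
          exact pt.left z hz
        rw [this.fderiv_eq, fderiv_id]
      have i2 : fderiv ℝ (w ∘ Φ) y = ((fderiv ℝ w (Φ y)).comp (fderiv ℝ pt.Hi (a + pt.H y))).comp
          (fderiv ℝ pt.H y) := by
        have h1 : HasFDerivAt (fun y => a + pt.H y) (fderiv ℝ pt.H y) y := d1.hasFDerivAt.const_add a
        have h2 : HasFDerivAt Φ _ y := d3.hasFDerivAt.comp y h1
        have h3 : HasFDerivAt (w ∘ Φ) _ y := (hwd (Φ y)).hasFDerivAt.comp y h2
        rw [h3.fderiv]; rfl
      have i3 : G y = (Gt (pt.H y)).comp (fderiv ℝ pt.H y) := by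
        rw [hGt, cut_mem (hAQ y hy), ContinuousLinearMap.comp_assoc, i1, pt.left y (hAU y hy)]
        rfl
      have i4 : Gt (a + pt.H y) = (G (Φ y)).comp (fderiv ℝ pt.Hi (a + pt.H y)) := by
        rw [hGt, cut_mem (hAQs y hy)]
      have i5 : fderiv ℝ (w ∘ Φ) y - G y = 
          ((fderiv ℝ w (Φ y) - G (Φ y)).comp (fderiv ℝ pt.Hi (a + pt.H y))).comp (fderiv ℝ pt.H y)
          + (Gt (a + pt.H y) - Gt (pt.H y)).comp (fderiv ℝ pt.H y) := by
        rw [i2, i4]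
        nth_rewrite 1 [i3]
        ext v; simp
      rw [i5]
      have n1 : ‖fderiv ℝ pt.H y‖ ≤ K := norm_fderiv_le_of_lipschitz ℝ pt.lipH
      have n2 : ‖fderiv ℝ pt.Hi (a + pt.H y)‖ ≤ K := norm_fderiv_le_of_lipschitz ℝ pt.lipHi
      simp only [Pi.add_apply, Pi.smul_apply, Function.comp, smul_eq_mul]
      refine (norm_add_le _ _).trans (le_trans ?_ (le_abs_self _))
      refine add_le_add ?_ ?_
      · calc _ ≤ ‖fderiv ℝ w (Φ y) - G (Φ y)‖ * ‖fderiv ℝ pt.Hi (a + pt.H y)‖ * ‖fderiv ℝ pt.H y‖ :=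
            (ContinuousLinearMap.opNorm_comp_le _ _).trans (by
              gcongr; exact ContinuousLinearMap.opNorm_comp_le _ _)
          _ ≤ ‖fderiv ℝ w (Φ y) - G (Φ y)‖ * K * K := by gcongr
          _ = _ := by ring
      · calc _ ≤ _ := ContinuousLinearMap.opNorm_comp_le _ _
          _ ≤ ‖Gt (a + pt.H y) - Gt (pt.H y)‖ * K := by gcongr
          _ = _ := by ring
    refine (eLpNorm_mono_ae hle).trans ?_
    refine (eLpNorm_add_le (s1'.norm.const_smul _) (s2'.norm.const_smul _) hp1).trans ?_
    rw [eLpNorm_const_smul, eLpNorm_const_smul, eLpNorm_norm, eLpNorm_norm]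
    have hKe : ‖(K : ℝ)‖ₑ = K := by simp
    have hKKe : ‖(K * K : ℝ)‖ₑ = K * K := by rw [enorm_mul, hKe]
    rw [hKe, hKKe]
    calc _ ≤ (K * K) * (C1 * ε0) + K * (C2 * ε0) := by
          gcongr
          · exact b1.trans (by gcongr)
          · exact b2.trans (by gcongr)
      _ ≤ (1 + K + K * K) * (C1 * ε0) + (1 + K + K * K) * (C2 * ε0) := by
          gcongr
          · exact le_add_self
          · exact le_add_self.trans le_self_add
      _ = T * ε0 := by rw [hT]; ring
      _ ≤ ε := hTε
end

open MeasureTheory Filter Topology Set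
open scoped ENNReal RealInnerProductSpace NNReal

section
open scoped Manifold
variable {E : Type*} [NormedAddCommGroup E] [InnerProductSpace ℝ E]
    [FiniteDimensional ℝ E] [MeasurableSpace E] [BorelSpace E] (μ : Measure E)
    [μ.IsAddHaarMeasure]

theorem finite_patches {Ω : Set E} (hb : Bornology.IsBounded Ω)
    (hpt : ∀ x ∈ closure Ω, Nonempty (LPatch Ω x)) :
    ∃ (t : Finset (closure Ω)) (pt : ∀ i : t, LPatch Ω ((i : closure Ω) : E)),
      closure Ω ⊆ ⋃ i, (pt i).V := by
  have hc : IsCompact (closure Ω) := hb.isCompact_closure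
  have pt : ∀ x : closure Ω, Nonempty (LPatch Ω x.1) := fun x => hpt x.1 x.2
  obtain ⟨t, ht⟩ := hc.elim_nhds_subcover' (fun x hx => (pt ⟨x, hx⟩).some.V) (fun x hx =>
    (pt ⟨x, hx⟩).some.isOpen_V.mem_nhds (pt ⟨x, hx⟩).some.mem_V)
  refine ⟨t, fun i => (pt i).some, fun x hx => ?_⟩
  obtain ⟨i, hi, hxi⟩ := mem_iUnion₂.1 (ht hx)
  exact mem_iUnion.2 ⟨⟨i, hi⟩, hxi⟩

theorem lip_sum {ι : Type*} (s : Finset ι) (f : ι → E → ℝ) (h : ∀ i, ∃ K, LipschitzWith K (f i)) :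
    ∃ K, LipschitzWith K (fun x => ∑ i ∈ s, f i x) := by
  classical
  induction s using Finset.induction_on with
  | empty => exact ⟨0, by simpa using LipschitzWith.const (α := E) (0:ℝ)⟩
  | insert a s ha ih =>
    obtain ⟨K, hK⟩ := ih
    obtain ⟨K', hK'⟩ := h a
    refine ⟨K' + K, ?_⟩
    simp_rw [Finset.sum_insert ha]
    exact hK'.add hK

theorem eLpNorm_sum_ind_le {ι : Type*} [Fintype ι] {Ω : Set E} {p : ℝ≥0∞} (hp1 : 1 ≤ p)
    {V : ι → Set E} (hV : ∀ i, MeasurableSet (V i)) {g : ι → E → ℝ}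
    (hg : ∀ i, AEStronglyMeasurable (g i) (μ.restrict Ω)) {F : Type*} [NormedAddCommGroup F]
    {f : E → F} (hf : ∀ᵐ x ∂(μ.restrict Ω), ‖f x‖ ≤ ∑ i, (V i).indicator (g i) x) :
    eLpNorm f p (μ.restrict Ω) ≤ ∑ i, eLpNorm (g i) p (μ.restrict (V i ∩ Ω)) := by
  have h1 : ∀ᵐ x ∂(μ.restrict Ω), ‖f x‖ ≤ ‖(∑ i, (V i).indicator (g i)) x‖ := by
    filter_upwards [hf] with x hx
    refine hx.trans ?_
    rw [Finset.sum_apply]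
    exact le_abs_self _
  refine (eLpNorm_mono_ae h1).trans ?_
  refine (eLpNorm_sum_le (fun i _ => (hg i).indicator (hV i)) hp1).trans ?_
  refine le_of_eq (Finset.sum_congr rfl fun i _ => ?_)
  rw [eLpNorm_indicator_eq_eLpNorm_restrict (hV i), Measure.restrict_restrict (hV i)]

theorem dense_lip {Ω : Set E} (hΩ : IsOpen Ω) (hb : Bornology.IsBounded Ω)
    (hpt : ∀ x ∈ closure Ω, Nonempty (LPatch Ω x))
    {u : E → ℝ} {G : E → E →L[ℝ] ℝ}
    {p : ℝ≥0∞} (hp1 : 1 ≤ p) (hp : p ≠ ∞)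
    (hu : IntegrableOn u Ω μ) (hG : IntegrableOn G Ω μ)
    (hup : MemLp u p (μ.restrict Ω)) (hGp : MemLp G p (μ.restrict Ω)) (hw : WeakD μ Ω u G)
    {ε : ℝ≥0∞} (hε : ε ≠ 0) :
    ∃ (w : E → ℝ) (K : ℝ≥0), LipschitzWith K w ∧
      eLpNorm (fun x => w x - u x) p (μ.restrict Ω) ≤ ε ∧
      eLpNorm (fun x => fderiv ℝ w x - G x) p (μ.restrict Ω) ≤ ε := by
  obtain ⟨t, pt, hcov⟩ := finite_patches hb hpt
  obtain ⟨χ, hχ⟩ := SmoothPartitionOfUnity.exists_isSubordinate 𝓘(ℝ, E) isClosed_closure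
    (fun i => (pt i).V) (fun i => (pt i).isOpen_V) hcov
  have hχc : ∀ i, ContDiff ℝ 1 (χ i) := fun i => (χ i).contMDiff.contDiff.of_le (by simp)
  have hχs : ∀ i, HasCompactSupport (χ i) := fun i =>
    HasCompactSupport.of_support_subset_isCompact (((pt i).bdd_V.subset (hχ i)).isCompact_closure)
      ((subset_tsupport _).trans subset_closure)
  have hχcf : ∀ i, Continuous (fderiv ℝ (χ i)) := fun i => (hχc i).continuous_fderiv one_ne_zero
  choose B hB using fun i => ((hχs i).fderiv ℝ).exists_bound_of_continuous (hχcf i)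
  set T : ℝ≥0∞ := ∑ i, (1 + ‖B i‖ₑ) with hT
  have hTf : T ≠ ∞ := by rw [hT]; exact ENNReal.sum_ne_top.2 (fun i _ => by finiteness)
  set ε0 := ε / T with hε0
  have hε0' : ε0 ≠ 0 := ENNReal.div_ne_zero.2 ⟨hε, hTf⟩
  have hTε : T * ε0 ≤ ε := ENNReal.mul_div_le
  choose w K hK hw1 hw2 using fun i => patch_approx μ hΩ (pt i) hp1 hp hu hG hup hGp hw hε0'
  have hwb : ∀ i, ∃ b : ℝ≥0, ∀ x ∈ (pt i).V, ‖w i x‖ ≤ b := by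
    intro i
    obtain ⟨b, hb⟩ := ((hK i).isBounded_image (pt i).bdd_V).exists_norm_le
    exact ⟨b.toNNReal, fun x hx => (hb _ (mem_image_of_mem _ hx)).trans (Real.le_coe_toNNReal b)⟩
  choose b hb' using hwb
  have hnV : ∀ i x, x ∉ (pt i).V → χ i x = 0 := fun i x hx =>
    image_eq_zero_of_notMem_tsupport (fun h => hx (hχ i h))
  have hnVf : ∀ i x, x ∉ (pt i).V → fderiv ℝ (χ i) x = 0 := fun i x hx =>
    image_eq_zero_of_notMem_tsupport (fun h => hx (hχ i (tsupport_fderiv_subset ℝ h)))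
  have hLip : ∀ i, ∃ K, LipschitzWith K (fun x => χ i x * w i x) := by
    intro i
    obtain ⟨C, hC⟩ := (hχc i).lipschitzWith_of_hasCompactSupport (hχs i) (by simp)
    refine ⟨_, lip_smul_of_bdd (A := 1) (B := b i) hC (hK i) (fun x => ?_) (fun x hx => ?_)⟩
    · rw [abs_of_nonneg (χ.nonneg i x)]; simpa using χ.le_one i x
    · refine hb' i x (by_contra fun h => hx (hnV i x h))
  obtain ⟨K', hK'⟩ := lip_sum Finset.univ _ hLip
  have hsum : ∀ x ∈ closure Ω, ∑ i, χ i x = 1 := fun x hx => by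
    rw [← χ.sum_eq_one hx, finsum_eq_sum_of_fintype]
  have hχle : ∀ i x, ‖χ i x‖ ≤ 1 := fun i x => by
    rw [Real.norm_eq_abs, abs_of_nonneg (χ.nonneg i x)]; exact χ.le_one i x
  have s1 : ∀ i, AEStronglyMeasurable (fun x => w i x - u x) (μ.restrict Ω) := fun i =>
    (hK i).continuous.aestronglyMeasurable.sub hup.1
  have s2 : ∀ i, AEStronglyMeasurable (fun x => fderiv ℝ (w i) x - G x) (μ.restrict Ω) := fun i =>
    (sm_fderiv' (w i)).aestronglyMeasurable.sub hGp.1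
  have hmono : ∀ i, μ.restrict ((pt i).V ∩ Ω) ≤ μ.restrict Ω := fun i =>
    Measure.restrict_mono inter_subset_right le_rfl
  refine ⟨_, K', hK', ?_, ?_⟩
  · refine (eLpNorm_sum_ind_le μ hp1 (V := fun i => (pt i).V)
      (g := fun i x => ‖w i x - u x‖) (fun i => (pt i).isOpen_V.measurableSet)
      (fun i => (s1 i).norm) ?_).trans ?_
    · filter_upwards [ae_restrict_mem hΩ.measurableSet] with x hx
      have : ∑ i, χ i x * w i x - u x = ∑ i, χ i x * (w i x - u x) := by
        simp_rw [mul_sub]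
        rw [Finset.sum_sub_distrib, ← Finset.sum_mul, hsum x (subset_closure hx), one_mul]
      rw [this]
      refine (norm_sum_le _ _).trans (Finset.sum_le_sum fun i _ => ?_)
      by_cases hxV : x ∈ (pt i).V
      · rw [indicator_of_mem hxV, norm_mul]
        exact mul_le_of_le_one_left (norm_nonneg _) (hχle i x)
      · simp [hnV i x hxV, hxV]
    · calc _ ≤ ∑ i, (1 + ‖B i‖ₑ) * ε0 := by
            refine Finset.sum_le_sum fun i _ => ?_
            rw [eLpNorm_norm]
            refine (hw1 i).trans ?_
            rw [add_mul, one_mul]; exact le_self_add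
        _ ≤ ε := by rw [← Finset.sum_mul]; exact hTε
  · refine (eLpNorm_sum_ind_le μ hp1 (V := fun i => (pt i).V)
      (g := fun i => (fun x => ‖fderiv ℝ (w i) x - G x‖) + B i • (fun x => ‖w i x - u x‖))
      (fun i => (pt i).isOpen_V.measurableSet)
      (fun i => (s2 i).norm.add ((s1 i).norm.const_smul _)) ?_).trans ?_
    · have hd : ∀ᵐ x ∂(μ.restrict Ω), ∀ i, DifferentiableAt ℝ (w i) x :=
        ae_restrict_of_ae (ae_all_iff.2 fun i => (hK i).ae_differentiableAt)
      filter_upwards [ae_restrict_mem hΩ.measurableSet, hd] with x hx hdx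
      have hχd : ∀ i, HasFDerivAt (χ i) (fderiv ℝ (χ i) x) x := fun i =>
        ((hχc i).differentiable one_ne_zero).differentiableAt.hasFDerivAt
      have h1 : HasFDerivAt (fun x => ∑ i, χ i x * w i x)
          (∑ i, (χ i x • fderiv ℝ (w i) x + w i x • fderiv ℝ (χ i) x)) x :=
        HasFDerivAt.fun_sum fun i _ => (hχd i).mul (hdx i).hasFDerivAt
      have h2 : ∑ i, fderiv ℝ (χ i) x = 0 := by
        have h3 : HasFDerivAt (fun x => ∑ i, χ i x) (∑ i, fderiv ℝ (χ i) x) x :=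
          HasFDerivAt.fun_sum fun i _ => hχd i
        have h4 : (fun x => ∑ i, χ i x) =ᶠ[𝓝 x] fun _ => (1:ℝ) := by
          filter_upwards [hΩ.mem_nhds hx] with y hy
          exact hsum y (subset_closure hy)
        rw [← h3.fderiv, h4.fderiv_eq, fderiv_const_apply]
      have h5 : fderiv ℝ (fun x => ∑ i, χ i x * w i x) x - G x =
          ∑ i, (χ i x • (fderiv ℝ (w i) x - G x) + (w i x - u x) • fderiv ℝ (χ i) x) := by
        rw [h1.fderiv]
        simp_rw [smul_sub, sub_smul, Finset.sum_add_distrib, Finset.sum_sub_distrib]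
        rw [← Finset.smul_sum, h2, ← Finset.sum_smul, hsum x (subset_closure hx)]
        simp only [one_smul, smul_zero, sub_zero]
        abel
      rw [h5]
      refine (norm_sum_le _ _).trans (Finset.sum_le_sum fun i _ => ?_)
      by_cases hxV : x ∈ (pt i).V
      · rw [indicator_of_mem hxV]
        refine (norm_add_le _ _).trans ?_
        simp only [Pi.add_apply, Pi.smul_apply, smul_eq_mul]
        refine add_le_add ?_ ?_
        · rw [norm_smul]
          exact mul_le_of_le_one_left (norm_nonneg _) (hχle i x)
        · rw [norm_smul, mul_comm]
          gcongr
          exact hB i x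
      · simp [hnV i x hxV, hnVf i x hxV, hxV]
    · calc _ ≤ ∑ i, (1 + ‖B i‖ₑ) * ε0 := by
            refine Finset.sum_le_sum fun i _ => ?_
            refine (eLpNorm_add_le ((s2 i).norm.mono_measure (hmono i))
              (((s1 i).norm.const_smul _).mono_measure (hmono i)) hp1).trans ?_
            rw [eLpNorm_const_smul, eLpNorm_norm, eLpNorm_norm, add_mul, one_mul]
            exact add_le_add (hw2 i) (by gcongr; exact hw1 i)
        _ ≤ ε := by rw [← Finset.sum_mul]; exact hTε
end

open MeasureTheory Filter Topology Set
open scoped ENNReal RealInnerProductSpace NNReal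

section
variable {E : Type*} [NormedAddCommGroup E] [InnerProductSpace ℝ E]
    [FiniteDimensional ℝ E] [MeasurableSpace E] [BorelSpace E] (μ : Measure E)
    [μ.IsAddHaarMeasure]

open Classical in
noncomputable def gradSup (w : E → ℝ) (z : E) : ℝ≥0∞ :=
  if DifferentiableAt ℝ w z then ‖fderiv ℝ w z‖ₑ else ∞

theorem gradSup_meas (w : E → ℝ) : Measurable (gradSup w) := by
  classical
  exact Measurable.ite (measurableSet_of_differentiableAt ℝ w) (sm_fderiv' w).enorm measurable_const

theorem lip_ftc {w : E → ℝ} {K : ℝ≥0} (hw : LipschitzWith K w) (x y : E) :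
    ‖w y - w x‖ₑ ≤ ‖y - x‖ₑ * ∫⁻ t in Ioc (0:ℝ) 1, gradSup w (x + t • (y - x)) := by
  by_cases hxy : y = x
  · simp [hxy]
  have hne : ‖y - x‖ₑ ≠ 0 := by simpa [sub_eq_zero] using hxy
  set W : ℝ → ℝ := fun t => w (x + t • (y - x)) with hW
  have hL : LipschitzWith (K * ‖y - x‖₊) W := by
    refine LipschitzWith.of_dist_le_mul fun s t => ?_
    refine (hw.dist_le_mul _ _).trans (le_of_eq ?_)
    rw [dist_add_left, dist_eq_norm, ← sub_smul, norm_smul, Real.dist_eq, Real.norm_eq_abs]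
    push_cast
    ring
  have hac : AbsolutelyContinuousOnInterval W 0 1 :=
    (hL.lipschitzOnWith (s := uIcc 0 1)).absolutelyContinuousOnInterval
  have h1 := hac.integral_deriv_eq_sub
  have h2 : W 1 - W 0 = w y - w x := by simp [hW]
  rw [← h2, ← h1, intervalIntegral.integral_of_le zero_le_one]
  refine (enorm_integral_le_lintegral_enorm _).trans ?_
  rw [← lintegral_const_mul' _ _ (by finiteness)]
  refine lintegral_mono fun t => ?_
  by_cases hd : DifferentiableAt ℝ w (x + t • (y - x))
  · have h3 : HasDerivAt (fun t : ℝ => x + t • (y - x)) (y - x) t := by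
      simpa using ((hasDerivAt_id t).smul_const (y - x)).const_add x
    have h4 : HasDerivAt W (fderiv ℝ w (x + t • (y - x)) (y - x)) t :=
      hd.hasFDerivAt.comp_hasDerivAt t h3
    rw [h4.deriv, gradSup, if_pos hd, mul_comm]
    exact ContinuousLinearMap.le_opENorm _ _
  · rw [gradSup, if_neg hd, ENNReal.mul_top hne]
    exact le_top

theorem lint_jensen {α : Type*} [MeasurableSpace α] {m : Measure α} [IsProbabilityMeasure m]
    {g : α → ℝ≥0∞} (hg : Measurable g) {q : ℝ} (hq : 1 ≤ q) :
    (∫⁻ t, g t ∂m) ^ q ≤ ∫⁻ t, g t ^ q ∂m := by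
  have hq0 : 0 < q := by linarith
  have h := eLpNorm_le_eLpNorm_of_exponent_le (p := 1) (q := ENNReal.ofReal q) (μ := m)
    (f := g) (by simpa using hq) hg.aestronglyMeasurable
  rw [eLpNorm_one_eq_lintegral_enorm, eLpNorm_eq_lintegral_rpow_enorm_toReal (by simpa using hq0) (by simp),
    ENNReal.toReal_ofReal hq0.le] at h
  simp only [enorm_eq_self] at h
  have := ENNReal.rpow_le_rpow h hq0.le
  rwa [← ENNReal.rpow_mul, one_div, inv_mul_cancel₀ hq0.ne', ENNReal.rpow_one] at this

theorem scale_le {D : Set E} (hD : MeasurableSet D) {h : E → ℝ≥0∞} (hh : Measurable h)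
    {a : ℝ} (ha : 1 / 2 ≤ a) {b : E} (hm : ∀ y ∈ D, b + a • y ∈ D) :
    ∫⁻ y in D, h (b + a • y) ∂μ ≤ (2:ℝ≥0∞) ^ (Module.finrank ℝ E) * ∫⁻ y in D, h y ∂μ := by
  have ha0 : 0 < a := by linarith
  have hf : Measurable (fun y : E => b + a • y) := by fun_prop
  have key := lip_map_le μ (f := fun y => b + a • y) (g := fun z => a⁻¹ • (z - b)) (K := 2) (Q := D)
    hf ?_ hD hm ?_
  · rw [← lintegral_map hh hf]
    refine (lintegral_mono' key le_rfl).trans ?_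
    rw [lintegral_smul_measure]
    rfl
  · refine LipschitzWith.of_dist_le_mul fun s t => ?_
    rw [dist_smul₀, dist_sub_right, Real.norm_of_nonneg (by positivity)]
    gcongr
    rw [inv_le_comm₀ ha0 (by norm_num)]
    simpa using ha
  · intro y hy
    simp [smul_smul, inv_mul_cancel₀ ha0.ne']

theorem conv_double {D : Set E} (hD : MeasurableSet D) (hc : Convex ℝ D) {h : E → ℝ≥0∞} (hh : Measurable h)
    {t : ℝ} (ht0 : 0 ≤ t) (ht1 : t ≤ 1) :
    ∫⁻ x in D, ∫⁻ y in D, h (x + t • (y - x)) ∂μ ∂μ ≤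
      (2:ℝ≥0∞) ^ (Module.finrank ℝ E) * (∫⁻ y in D, h y ∂μ) * μ D := by
  have hco : ∀ x ∈ D, ∀ y ∈ D, (1 - t) • x + t • y ∈ D := fun x hx y hy =>
    hc hx hy (by linarith) ht0 (by ring)
  have e : ∀ x y : E, x + t • (y - x) = (1 - t) • x + t • y := fun x y => by
    rw [smul_sub, sub_smul, one_smul]; abel
  simp_rw [e]
  rcases le_total (1 / 2) t with h2 | h2
  · calc _ ≤ ∫⁻ x in D, (2:ℝ≥0∞) ^ (Module.finrank ℝ E) * ∫⁻ y in D, h y ∂μ ∂μ := by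
          refine setLIntegral_mono' hD fun x hx => ?_
          exact scale_le μ hD hh h2 (hco x hx)
      _ = _ := by rw [setLIntegral_const]
  · rw [lintegral_lintegral_swap]
    · calc _ ≤ ∫⁻ x in D, (2:ℝ≥0∞) ^ (Module.finrank ℝ E) * ∫⁻ y in D, h y ∂μ ∂μ := by
            refine setLIntegral_mono' hD fun y hy => ?_
            have := scale_le μ hD hh (a := 1 - t) (b := t • y) (by linarith) (fun x hx => by
              rw [add_comm]; exact hco x hx y hy)
            simpa only [add_comm] using this
        _ = _ := by rw [setLIntegral_const]
    · exact Measurable.aemeasurable (by fun_prop)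

def HasP (μ : Measure E) (p : ℝ≥0∞) (Ω A : Set E) : Prop :=
  ∃ C : ℝ≥0∞, C ≠ ∞ ∧ ∀ (w : E → ℝ) (K : ℝ≥0), LipschitzWith K w → ∃ c : ℝ,
    eLpNorm (fun x => w x - c) p (μ.restrict A) ≤ C * eLpNorm (fderiv ℝ w) p (μ.restrict Ω)

theorem conv_poinc {D : Set E} (hD : IsOpen D) (hc : Convex ℝ D) (hb : Bornology.IsBounded D)
    {p : ℝ≥0∞} (hp1 : 1 ≤ p) (hp : p ≠ ∞) : HasP μ p D D := by
  have hp0 : p ≠ 0 := by intro h; simp [h] at hp1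
  have hq : 1 ≤ p.toReal := by
    rw [← ENNReal.toReal_one]; exact ENNReal.toReal_mono hp hp1
  set q := p.toReal
  have hq0 : 0 < q := by linarith
  rcases D.eq_empty_or_nonempty with rfl | hne
  · exact ⟨1, by simp, fun w K _ => ⟨0, by simp⟩⟩
  have hDm := hD.measurableSet
  have hμ0 : μ D ≠ 0 := (hD.measure_pos μ hne).ne'
  have hμf : μ D ≠ ∞ := hb.measure_lt_top.ne
  set R := Metric.ediam D with hRd
  have hRf : R ≠ ∞ := hb.ediam_ne_top
  set C : ℝ≥0∞ := R ^ q * (2:ℝ≥0∞) ^ (Module.finrank ℝ E) with hC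
  have hCf : C ≠ ∞ := by
    rw [hC]; exact ENNReal.mul_ne_top (ENNReal.rpow_ne_top_of_nonneg hq0.le hRf) (by finiteness)
  refine ⟨C ^ (1 / q), ENNReal.rpow_ne_top_of_nonneg (by positivity) hCf, fun w K hw => ?_⟩
  set h : E → ℝ≥0∞ := fun z => gradSup w z ^ q with hh
  have hhm : Measurable h := (gradSup_meas w).pow_const _
  have hwc := hw.continuous
  have hI : ∫⁻ z in D, h z ∂μ = ∫⁻ z in D, ‖fderiv ℝ w z‖ₑ ^ q ∂μ := by
    refine lintegral_congr_ae (ae_restrict_of_ae ?_)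
    filter_upwards [hw.ae_differentiableAt (μ := μ)] with z hz
    rw [hh]; simp only [gradSup, if_pos hz]
  haveI : IsProbabilityMeasure ((volume : Measure ℝ).restrict (Ioc (0:ℝ) 1)) := ⟨by simp⟩
  have hpt : ∀ x ∈ D, ∀ y ∈ D, ‖w y - w x‖ₑ ^ q ≤ R ^ q * ∫⁻ t in Ioc (0:ℝ) 1, h (x + t • (y - x)) := by
    intro x hx y hy
    calc _ ≤ (‖y - x‖ₑ * ∫⁻ t in Ioc (0:ℝ) 1, gradSup w (x + t • (y - x))) ^ q :=
          ENNReal.rpow_le_rpow (lip_ftc hw x y) hq0.le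
      _ = ‖y - x‖ₑ ^ q * (∫⁻ t in Ioc (0:ℝ) 1, gradSup w (x + t • (y - x))) ^ q :=
          ENNReal.mul_rpow_of_nonneg _ _ hq0.le
      _ ≤ _ := by
          gcongr
          · rw [← edist_eq_enorm_sub]; exact Metric.edist_le_ediam_of_mem hy hx
          · exact lint_jensen ((gradSup_meas w).comp (by fun_prop)) hq
  set Fx : E → ℝ≥0∞ := fun x => ∫⁻ y in D, ‖w y - w x‖ₑ ^ q ∂μ with hFx
  have hFm : Measurable Fx := by
    refine Measurable.lintegral_prod_right' (f := fun z : E × E => ‖w z.2 - w z.1‖ₑ ^ q) ?_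
    exact Measurable.pow_const (Continuous.measurable (by fun_prop)) _
  have hmain : ∫⁻ x in D, Fx x ∂μ ≤ C * (∫⁻ z in D, h z ∂μ) * μ D := by
    calc _ ≤ ∫⁻ x in D, ∫⁻ y in D, (R ^ q * ∫⁻ t in Ioc (0:ℝ) 1, h (x + t • (y - x)) ∂volume) ∂μ ∂μ :=
          setLIntegral_mono' hDm fun x hx => setLIntegral_mono' hDm fun y hy => hpt x hx y hy
      _ = R ^ q * ∫⁻ x in D, ∫⁻ y in D, ∫⁻ t in Ioc (0:ℝ) 1, h (x + t • (y - x)) ∂volume ∂μ ∂μ := by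
          have hRq : R ^ q ≠ ∞ := ENNReal.rpow_ne_top_of_nonneg hq0.le hRf
          simp_rw [lintegral_const_mul' _ _ hRq]
      _ = R ^ q * ∫⁻ x in D, ∫⁻ t in Ioc (0:ℝ) 1, ∫⁻ y in D, h (x + t • (y - x)) ∂μ ∂volume ∂μ := by
          congr 1
          refine lintegral_congr fun x => lintegral_lintegral_swap ?_
          exact Measurable.aemeasurable (hhm.comp (by fun_prop))
      _ = R ^ q * ∫⁻ t in Ioc (0:ℝ) 1, ∫⁻ x in D, ∫⁻ y in D, h (x + t • (y - x)) ∂μ ∂μ ∂volume := by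
          congr 1
          refine lintegral_lintegral_swap (Measurable.aemeasurable ?_)
          refine Measurable.lintegral_prod_right'
            (f := fun z : (E × ℝ) × E => h (z.1.1 + z.1.2 • (z.2 - z.1.1))) ?_
          exact hhm.comp (by fun_prop)
      _ ≤ R ^ q * ∫⁻ t in Ioc (0:ℝ) 1, (2:ℝ≥0∞) ^ (Module.finrank ℝ E) * (∫⁻ y in D, h y ∂μ) * μ D ∂volume := by
          refine mul_le_mul' le_rfl (setLIntegral_mono' measurableSet_Ioc fun t ht => ?_)
          exact conv_double μ hDm hc hhm ht.1.le ht.2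
      _ = _ := by
          rw [setLIntegral_const, hC]
          simp
          ring
  obtain ⟨x, hx, hxF⟩ := exists_le_setLAverage hμ0 hμf hFm.aemeasurable
  have hx2 : Fx x ≤ C * ∫⁻ z in D, h z ∂μ := by
    refine hxF.trans ?_
    rw [setLAverage_eq]
    refine ENNReal.div_le_of_le_mul hmain
  refine ⟨w x, ?_⟩
  rw [eLpNorm_eq_lintegral_rpow_enorm_toReal hp0 hp, eLpNorm_eq_lintegral_rpow_enorm_toReal hp0 hp,
    ← ENNReal.mul_rpow_of_nonneg _ _ (by positivity), ← hI]
  exact ENNReal.rpow_le_rpow hx2 (by positivity)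

theorem patch_poinc {Ω : Set E} (hΩ : IsOpen Ω) {x : E} (pt : LPatch Ω x)
    {p : ℝ≥0∞} (hp1 : 1 ≤ p) (hp : p ≠ ∞) : HasP μ p Ω (pt.V ∩ Ω) := by
  set K := pt.K
  set d := Module.finrank ℝ E
  set D := Metric.ball (pt.H x) pt.r ∩ pt.P with hD
  set A := pt.V ∩ Ω with hA
  have hDo : IsOpen D := Metric.isOpen_ball.inter pt.openP
  have hAm : MeasurableSet A := (pt.isOpen_V.inter hΩ).measurableSet
  have hHim := pt.lipHi.continuous.measurable
  have hHm := pt.lipH.continuous.measurable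
  obtain ⟨C, hC, hP⟩ := conv_poinc μ hDo ((convex_ball _ _).inter pt.convP)
    (Metric.isBounded_ball.subset inter_subset_left) hp1 hp
  set C2 : ℝ≥0∞ := max 1 ((K : ℝ≥0∞) ^ d) with hC2
  have hC2f : C2 ≠ ∞ := (max_lt ENNReal.one_lt_top (by finiteness)).ne
  have m1 : Measure.map pt.H (μ.restrict A) ≤ ((K : ℝ≥0∞) ^ d) • μ.restrict D := by
    refine lip_map_le μ hHm pt.lipHi hAm (fun y hy => ⟨hy.1.2, (pt.mem y hy.1.1).1 hy.2⟩) 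
      (fun y hy => pt.left y hy.1.1)
  have hb2 : ∀ z ∈ D, z ∈ Metric.ball (pt.H x) (2 * pt.r) := fun z hz =>
    Metric.ball_subset_ball (by linarith [pt.hr]) hz.1
  have m2 : Measure.map pt.Hi (μ.restrict D) ≤ ((K : ℝ≥0∞) ^ d) • μ.restrict Ω := by
    refine lip_map_le μ hHim pt.lipH hDo.measurableSet (fun z hz => ?_) 
      (fun z hz => pt.right z (hb2 z hz))
    rw [pt.mem _ (pt.mapsHi (hb2 z hz)), pt.right z (hb2 z hz)]
    exact hz.2
  refine ⟨C2 * (C * (K * C2)), by finiteness, fun w Kw hw => ?_⟩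
  obtain ⟨c, hc⟩ := hP (w ∘ pt.Hi) _ (hw.comp pt.lipHi)
  refine ⟨c, ?_⟩
  have e1 : (fun y => w y - c) =ᵐ[μ.restrict A] (fun z => (w ∘ pt.Hi) z - c) ∘ pt.H := by
    filter_upwards [ae_restrict_mem hAm] with y hy
    simp only [Function.comp]
    rw [pt.left y hy.1.1]
  rw [eLpNorm_congr_ae e1]
  have hcont : Continuous (fun z => (w ∘ pt.Hi) z - c) :=
    (hw.continuous.comp pt.lipHi.continuous).sub continuous_const
  refine (eLpNorm_comp_le_of_map_le hp1 hp hHm m1 hcont.aestronglyMeasurable).trans ?_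
  have hgrad : eLpNorm (fderiv ℝ (w ∘ pt.Hi)) p (μ.restrict D) ≤
      K * (C2 * eLpNorm (fderiv ℝ w) p (μ.restrict Ω)) := by
    have hle : ∀ᵐ z ∂(μ.restrict D), ‖fderiv ℝ (w ∘ pt.Hi) z‖ ≤ K * ‖((fderiv ℝ w) ∘ pt.Hi) z‖ := by
      have h1 : ∀ᵐ y ∂(μ.restrict Ω), DifferentiableAt ℝ w y :=
        ae_restrict_of_ae hw.ae_differentiableAt
      have h2 : ∀ᵐ z ∂(μ.restrict D), DifferentiableAt ℝ pt.Hi z :=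
        ae_restrict_of_ae pt.lipHi.ae_differentiableAt
      filter_upwards [ae_comp_of_map_le hHim m2 h1, h2] with z d1 d2
      rw [fderiv_comp z d1 d2, mul_comm]
      refine (ContinuousLinearMap.opNorm_comp_le _ _).trans ?_
      simp only [Function.comp]
      gcongr
      exact norm_fderiv_le_of_lipschitz ℝ pt.lipHi
    have := eLpNorm_le_nnreal_smul_eLpNorm_of_ae_le_mul hle p
    refine this.trans ?_
    rw [ENNReal.smul_def, smul_eq_mul]
    gcongr
    exact eLpNorm_comp_le_of_map_le hp1 hp hHim m2 (sm_fderiv' w).aestronglyMeasurable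
  calc _ ≤ C2 * (C * (K * (C2 * eLpNorm (fderiv ℝ w) p (μ.restrict Ω)))) := by
        gcongr
        exact hc.trans (by gcongr)
    _ = _ := by ring
end

open MeasureTheory Filter Topology Set
open scoped ENNReal RealInnerProductSpace NNReal

section
variable {E : Type*} [NormedAddCommGroup E] [InnerProductSpace ℝ E]
    [FiniteDimensional ℝ E] [MeasurableSpace E] [BorelSpace E] (μ : Measure E)
    [μ.IsAddHaarMeasure]

theorem eLpNorm_union_le {f : E → ℝ} (hf : AEStronglyMeasurable f μ) {p : ℝ≥0∞} (hp1 : 1 ≤ p)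
    {A B : Set E} (hA : MeasurableSet A) (hB : MeasurableSet B) :
    eLpNorm f p (μ.restrict (A ∪ B)) ≤ eLpNorm f p (μ.restrict A) + eLpNorm f p (μ.restrict B) := by
  rw [← eLpNorm_indicator_eq_eLpNorm_restrict (hA.union hB),
    ← eLpNorm_norm f (μ := μ.restrict A), ← eLpNorm_norm f (μ := μ.restrict B),
    ← eLpNorm_indicator_eq_eLpNorm_restrict hA, ← eLpNorm_indicator_eq_eLpNorm_restrict hB]
  refine le_trans (eLpNorm_mono_real fun x => ?_) (eLpNorm_add_le (hf.norm.indicator hA) (hf.norm.indicator hB) hp1)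
  by_cases h1 : x ∈ A <;> by_cases h2 : x ∈ B <;> simp [h1, h2]

theorem HasP.union {p : ℝ≥0∞} (hp1 : 1 ≤ p) (hp : p ≠ ∞) {Ω A B : Set E} (hA : HasP μ p Ω A)
    (hB : HasP μ p Ω B) (hAo : IsOpen A) (hBo : IsOpen B) (hBb : Bornology.IsBounded B)
    (hne : (A ∩ B).Nonempty) : HasP μ p Ω (A ∪ B) := by
  obtain ⟨CA, hCA, hA⟩ := hA
  obtain ⟨CB, hCB, hB⟩ := hB
  have hp0 : p ≠ 0 := by intro h; simp [h] at hp1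
  have hBf : μ B ≠ ∞ := hBb.measure_lt_top.ne
  have hI0 : μ (A ∩ B) ≠ 0 := ((hAo.inter hBo).measure_pos μ hne).ne'
  have hIf : μ (A ∩ B) ≠ ∞ := (measure_lt_top_of_subset inter_subset_right hBf).ne
  set a := μ (A ∩ B) ^ (1 / p.toReal) with ha
  set b := μ B ^ (1 / p.toReal) with hb
  have hbf : b ≠ ∞ := ENNReal.rpow_ne_top_of_nonneg (by positivity) hBf
  have ha0 : a ≠ 0 := by
    rw [ha]; intro h; rw [ENNReal.rpow_eq_zero_iff] at h; rcases h with h | h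
    · exact hI0 h.1
    · exact hIf h.1
  have haf : a ≠ ∞ := ENNReal.rpow_ne_top_of_nonneg (by positivity) hIf
  refine ⟨(CA + CB) + (CA + CB) / a * b, ?_, fun w K hw => ?_⟩
  · have : (CA + CB) / a ≠ ∞ := ENNReal.div_ne_top (by finiteness) ha0
    finiteness
  obtain ⟨cA, h1⟩ := hA w K hw
  obtain ⟨cB, h2⟩ := hB w K hw
  refine ⟨cA, ?_⟩
  have hc := hw.continuous
  set g := eLpNorm (fderiv ℝ w) p (μ.restrict Ω)
  have mA : AEStronglyMeasurable (fun x => w x - cA) μ := (hc.sub continuous_const).aestronglyMeasurable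
  have mB : AEStronglyMeasurable (fun x => w x - cB) μ := (hc.sub continuous_const).aestronglyMeasurable
  have k1 : ‖cB - cA‖ₑ * a ≤ (CA + CB) * g := by
    have e : eLpNorm (fun _ : E => cB - cA) p (μ.restrict (A ∩ B)) = ‖cB - cA‖ₑ * a := by
      rw [eLpNorm_const' _ hp0 hp, Measure.restrict_apply_univ]
    rw [← e]
    have e2 : (fun _ : E => cB - cA) = (fun x => w x - cA) - (fun x => w x - cB) := by
      ext x; simp
    rw [e2]
    refine (eLpNorm_sub_le mA.restrict mB.restrict hp1).trans ?_
    rw [add_mul]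
    refine add_le_add ((eLpNorm_mono_measure _ (Measure.restrict_mono inter_subset_left le_rfl)).trans h1)
      ((eLpNorm_mono_measure _ (Measure.restrict_mono inter_subset_right le_rfl)).trans h2)
  have k2 : ‖cB - cA‖ₑ ≤ (CA + CB) / a * g := by
    have e : (CA + CB) / a * g = (CA + CB) * g / a := by
      rw [ENNReal.div_eq_inv_mul, ENNReal.div_eq_inv_mul]; ring
    rw [e, ENNReal.le_div_iff_mul_le (Or.inl ha0) (Or.inl haf)]
    exact k1
  have k3 : eLpNorm (fun x => w x - cA) p (μ.restrict B) ≤ CB * g + (CA + CB) / a * g * b := by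
    have e2 : (fun x => w x - cA) = (fun x => w x - cB) + (fun _ => cB - cA) := by
      ext x; simp
    rw [e2]
    refine (eLpNorm_add_le mB.restrict aestronglyMeasurable_const hp1).trans ?_
    rw [eLpNorm_const' _ hp0 hp, Measure.restrict_apply_univ]
    gcongr
  refine (eLpNorm_union_le μ mA hp1 hAo.measurableSet hBo.measurableSet).trans ?_
  refine (add_le_add h1 k3).trans (le_of_eq ?_)
  ring

theorem poinc_lip {Ω : Set E} (hΩ : IsOpen Ω) (hb : Bornology.IsBounded Ω) (hcon : IsConnected Ω)
    (hpt : ∀ x ∈ closure Ω, Nonempty (LPatch Ω x))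
    {p : ℝ≥0∞} (hp1 : 1 ≤ p) (hp : p ≠ ∞) : HasP μ p Ω Ω := by
  classical
  obtain ⟨t, pt, hcov⟩ := finite_patches hb hpt
  set A : t → Set E := fun i => (pt i).V ∩ Ω with hA
  have hAo : ∀ i, IsOpen (A i) := fun i => (pt i).isOpen_V.inter hΩ
  have hAb : ∀ i, Bornology.IsBounded (A i) := fun i => hb.subset inter_subset_right
  have hAne : ∀ i, (A i).Nonempty := fun i => by
    have := i.1.2
    rw [mem_closure_iff] at this
    exact this _ (pt i).isOpen_V (pt i).mem_V
  have hAP : ∀ i, HasP μ p Ω (A i) := fun i => patch_poinc μ hΩ (pt i) hp1 hp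
  have hAc : Ω ⊆ ⋃ i, A i := fun x hx => by
    obtain ⟨i, hi⟩ := mem_iUnion.1 (hcov (subset_closure hx))
    exact mem_iUnion.2 ⟨i, hi, hx⟩
  set Q : Finset t → Prop := fun S => HasP μ p Ω (⋃ i ∈ S, A i) with hQ
  obtain ⟨x0, hx0⟩ := hcon.nonempty
  obtain ⟨i0, hi0⟩ := mem_iUnion.1 (hAc hx0)
  have hex : ((Finset.univ : Finset (Finset t)).filter (fun S => S.Nonempty ∧ Q S)).Nonempty := by
    refine ⟨{i0}, ?_⟩
    simp only [Finset.mem_filter, Finset.mem_univ, true_and, hQ]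
    exact ⟨by simp, by simpa using hAP i0⟩
  obtain ⟨S, hS, hmax⟩ := Finset.exists_max_image _ Finset.card hex
  simp only [Finset.mem_filter, Finset.mem_univ, true_and] at hS hmax
  obtain ⟨⟨i1, hi1⟩, hQS⟩ := hS
  by_cases hall : ∀ i, i ∈ S
  · have : Ω = ⋃ i ∈ S, A i := by
      apply Subset.antisymm
      · intro x hx
        obtain ⟨i, hi⟩ := mem_iUnion.1 (hAc hx)
        exact mem_iUnion₂.2 ⟨i, hall i, hi⟩
      · exact iUnion₂_subset fun i _ => inter_subset_right
    rw [hQ] at hQS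
    simp only [← this] at hQS
    exact hQS
  · exfalso
    push Not at hall
    obtain ⟨i2, hi2⟩ := hall
    have h := hcon.isPreconnected (⋃ i ∈ S, A i) (⋃ i, ⋃ (_ : i ∉ S), A i)
      (isOpen_biUnion fun i _ => hAo i) (isOpen_iUnion fun i => isOpen_iUnion fun _ => hAo i) ?_ ?_ ?_
    · obtain ⟨x, hx, hx1, hx2⟩ := h
      obtain ⟨j, hj, hxj⟩ := mem_iUnion₂.1 hx2
      have hQ2 : Q (insert j S) := by
        simp only [hQ, Finset.set_biUnion_insert]
        rw [union_comm]
        exact HasP.union μ hp1 hp hQS (hAP j) (isOpen_biUnion fun i _ => hAo i) (hAo j) (hAb j) ⟨x, hx1, hxj⟩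
      have := hmax (insert j S) ⟨by simp, hQ2⟩
      rw [Finset.card_insert_of_notMem hj] at this
      omega
    · intro x hx
      obtain ⟨i, hi⟩ := mem_iUnion.1 (hAc hx)
      by_cases h : i ∈ S
      · exact Or.inl (mem_iUnion₂.2 ⟨i, h, hi⟩)
      · exact Or.inr (mem_iUnion₂.2 ⟨i, h, hi⟩)
    · obtain ⟨y, hy⟩ := hAne i1
      exact ⟨y, hy.2, mem_iUnion₂.2 ⟨i1, hi1, hy⟩⟩
    · obtain ⟨y, hy⟩ := hAne i2
      exact ⟨y, hy.2, mem_iUnion₂.2 ⟨i2, hi2, hy⟩⟩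

theorem eLpNorm_tri {α F : Type*} [MeasurableSpace α] {m : Measure α} [NormedAddCommGroup F]
    {f g : α → F} (hf : AEStronglyMeasurable f m) (hg : AEStronglyMeasurable g m) {p : ℝ≥0∞}
    (hp1 : 1 ≤ p) : eLpNorm f p m ≤ eLpNorm (fun x => f x - g x) p m + eLpNorm g p m := by
  have h := eLpNorm_add_le (hf.sub hg) hg hp1
  rw [sub_add_cancel] at h
  exact h

set_option maxHeartbeats 1000000 in
theorem weak_poinc {Ω : Set E} (hΩ : IsOpen Ω) (hb : Bornology.IsBounded Ω) (hcon : IsConnected Ω)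
    (hpt : ∀ x ∈ closure Ω, Nonempty (LPatch Ω x))
    {p : ℝ≥0∞} (hp1 : 1 ≤ p) (hp : p ≠ ∞) : ∃ C : ℝ≥0∞, C ≠ ∞ ∧
    ∀ (u : E → ℝ) (G : E → E →L[ℝ] ℝ), IntegrableOn u Ω μ → IntegrableOn G Ω μ →
      MemLp u p (μ.restrict Ω) → MemLp G p (μ.restrict Ω) → WeakD μ Ω u G → ∫ x in Ω, u x ∂μ = 0 →
      eLpNorm u p (μ.restrict Ω) ≤ C * eLpNorm G p (μ.restrict Ω) := by
  obtain ⟨C, hC, hP⟩ := poinc_lip μ hΩ hb hcon hpt hp1 hp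
  have hp0 : p ≠ 0 := by intro h; simp [h] at hp1
  have hf : μ Ω ≠ ∞ := hb.measure_lt_top.ne
  have h0 : μ Ω ≠ 0 := (hΩ.measure_pos μ hcon.nonempty).ne'
  have hfr : ∀ r : ℝ, μ Ω ^ r ≠ ∞ := fun r h => by
    rw [ENNReal.rpow_eq_top_iff] at h
    rcases h with h | h
    · exact h0 h.1
    · exact hf h.1
  set s := μ Ω ^ (1 / p.toReal) with hs
  set s1 := μ Ω ^ (1 - 1 / p.toReal) with hs1
  have hsf : s ≠ ∞ := hfr _
  have hs1f : s1 ≠ ∞ := hfr _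
  set B := 1 + s1 / μ Ω * s with hB
  have hBf : B ≠ ∞ := by
    have : s1 / μ Ω ≠ ∞ := ENNReal.div_ne_top hs1f h0
    finiteness
  refine ⟨B * C, by finiteness, fun u G hu hG hup hGp hw hm => ?_⟩
  haveI : IsFiniteMeasure (μ.restrict Ω) := ⟨by simpa using hf.lt_top⟩
  -- constant control
  have key : ∀ c : ℝ, eLpNorm u p (μ.restrict Ω) ≤ B * eLpNorm (fun x => u x - c) p (μ.restrict Ω) := by
    intro c
    have hmc : AEStronglyMeasurable (fun x => u x - c) (μ.restrict Ω) := hup.1.sub aestronglyMeasurable_const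
    have i1 : ∫ x in Ω, (u x - c) ∂μ = - (c * (μ Ω).toReal) := by
      rw [integral_sub hu (integrable_const c), hm]
      simp [Measure.real, mul_comm]
    have i2 : ‖c‖ₑ * μ Ω ≤ eLpNorm (fun x => u x - c) 1 (μ.restrict Ω) := by
      rw [eLpNorm_one_eq_lintegral_enorm]
      refine le_trans (le_of_eq ?_) (enorm_integral_le_lintegral_enorm _)
      rw [i1, enorm_neg, enorm_mul]
      congr 1
      rw [Real.enorm_of_nonneg ENNReal.toReal_nonneg, ENNReal.ofReal_toReal hf]
    have i3 := eLpNorm_le_eLpNorm_mul_rpow_measure_univ hp1 hmc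
    rw [Measure.restrict_apply_univ] at i3
    simp only [ENNReal.toReal_one, div_one] at i3
    have i4 : ‖c‖ₑ ≤ eLpNorm (fun x => u x - c) p (μ.restrict Ω) * s1 / μ Ω := by
      rw [ENNReal.le_div_iff_mul_le (Or.inl h0) (Or.inl hf)]
      exact i2.trans i3
    have e : u = (fun x => u x - c) + (fun _ => c) := by ext x; simp
    calc eLpNorm u p (μ.restrict Ω) = eLpNorm ((fun x => u x - c) + (fun _ => c)) p (μ.restrict Ω) := by
          rw [← e]
      _ ≤ _ := eLpNorm_add_le hmc aestronglyMeasurable_const hp1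
      _ ≤ eLpNorm (fun x => u x - c) p (μ.restrict Ω) +
          (eLpNorm (fun x => u x - c) p (μ.restrict Ω) * s1 / μ Ω) * s := by
          rw [eLpNorm_const' _ hp0 hp, Measure.restrict_apply_univ]
          gcongr
      _ = _ := by
          rw [hB, ENNReal.div_eq_inv_mul, ENNReal.div_eq_inv_mul]; ring
  have step : ∀ ε : ℝ≥0∞, ε ≠ 0 → eLpNorm u p (μ.restrict Ω) ≤
      B * C * eLpNorm G p (μ.restrict Ω) + B * (1 + C) * ε := by
    intro ε hε
    obtain ⟨w, K, hK, w1, w2⟩ := dense_lip μ hΩ hb hpt hp1 hp hu hG hup hGp hw hε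
    obtain ⟨c, hc⟩ := hP w K hK
    have m1 : AEStronglyMeasurable w (μ.restrict Ω) := hK.continuous.aestronglyMeasurable
    have g1 : eLpNorm (fderiv ℝ w) p (μ.restrict Ω) ≤ ε + eLpNorm G p (μ.restrict Ω) := by
      exact (eLpNorm_tri (sm_fderiv' w).aestronglyMeasurable hGp.1 hp1).trans (add_le_add w2 le_rfl)
    have g2 : eLpNorm (fun x => u x - c) p (μ.restrict Ω) ≤
        C * (ε + eLpNorm G p (μ.restrict Ω)) + ε := by
      have e : (fun x => u x - c) = (fun x => w x - c) - (fun x => w x - u x) := by ext x; simp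
      rw [e]
      refine (eLpNorm_sub_le (m1.sub aestronglyMeasurable_const) (m1.sub hup.1) hp1).trans ?_
      exact add_le_add (hc.trans (mul_le_mul' le_rfl g1)) w1
    refine (key c).trans ?_
    calc _ ≤ B * (C * (ε + eLpNorm G p (μ.restrict Ω)) + ε) := mul_le_mul' le_rfl g2
      _ = _ := by ring
  have hfin : B * (1 + C) ≠ ∞ := by finiteness
  refine ENNReal.le_of_forall_pos_le_add fun δ hδ _ => ?_
  refine (step (δ / (B * (1 + C))) (ENNReal.div_ne_zero.2 ⟨by simpa using hδ.ne', hfin⟩)).trans ?_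
  gcongr
  exact ENNReal.mul_div_le
end

open MeasureTheory Filter Topology Set
open scoped ENNReal RealInnerProductSpace NNReal

section
variable {n N : ℕ}

def Jm (A : Fin N → Fin n → ℝ) : EuclideanSpace ℝ (Fin N × Fin n) := WithLp.toLp 2 (fun p => A p.1 p.2)

theorem mdot_eq (A B : Fin N → Fin n → ℝ) : mdot A B = ⟪Jm A, Jm B⟫ := by
  simp [mdot, Jm, PiLp.inner_apply, Fintype.sum_prod_type, mul_comm]

theorem mnorm_eq (A : Fin N → Fin n → ℝ) : mnorm A = ‖Jm A‖ := by
  rw [mnorm, mdot_eq, real_inner_self_eq_norm_sq, Real.sqrt_sq (norm_nonneg _)]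

theorem Jm_sub (A B : Fin N → Fin n → ℝ) : Jm (A - B) = Jm A - Jm B := by
  ext p; simp [Jm]

theorem Jm_cont : Continuous (Jm : (Fin N → Fin n → ℝ) → _) := by
  unfold Jm
  refine (PiLp.continuous_toLp 2 _).comp ?_
  fun_prop

theorem mnorm_nonneg (A : Fin N → Fin n → ℝ) : 0 ≤ mnorm A := Real.sqrt_nonneg _

theorem mdot_abs_le (A B : Fin N → Fin n → ℝ) : |mdot A B| ≤ mnorm A * mnorm B := by
  rw [mdot_eq, mnorm_eq, mnorm_eq]; exact abs_real_inner_le_norm _ _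

theorem mnorm_sub_abs (A B : Fin N → Fin n → ℝ) : |mnorm A - mnorm B| ≤ mnorm (A - B) := by
  rw [mnorm_eq, mnorm_eq, mnorm_eq, Jm_sub]; exact abs_norm_sub_norm_le _ _

theorem mdot_sub (T A B : Fin N → Fin n → ℝ) : mdot T A - mdot T B = mdot T (A - B) := by
  rw [mdot_eq, mdot_eq, mdot_eq, Jm_sub, inner_sub_right]

theorem mnorm_cont : Continuous (mnorm : (Fin N → Fin n → ℝ) → ℝ) := by
  have : (mnorm : (Fin N → Fin n → ℝ) → ℝ) = fun A => ‖Jm A‖ := funext mnorm_eq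
  rw [this]; exact Jm_cont.norm

theorem mdot_cont : Continuous (fun z : (Fin N → Fin n → ℝ) × (Fin N → Fin n → ℝ) => mdot z.1 z.2) := by
  unfold mdot; fun_prop

theorem abs_le_mnorm (A : Fin N → Fin n → ℝ) (a : Fin N) (i : Fin n) : |A a i| ≤ mnorm A := by
  rw [mnorm_eq]
  have := PiLp.norm_apply_le (Jm A) (a, i)
  simpa [Jm] using this

theorem mnorm_le_sum (A : Fin N → Fin n → ℝ) : mnorm A ≤ ∑ a, ∑ i, |A a i| := by
  have h0 : 0 ≤ ∑ a, ∑ i, |A a i| := Finset.sum_nonneg fun a _ => Finset.sum_nonneg fun i _ => abs_nonneg _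
  rw [mnorm]
  refine Real.sqrt_le_iff.2 ⟨h0, ?_⟩
  rw [mdot, ← Fintype.sum_prod_type' (f := fun a i => A a i * A a i),
    ← Fintype.sum_prod_type' (f := fun a i => |A a i|)]
  have := Finset.sum_sq_le_sq_sum_of_nonneg (s := Finset.univ) (f := fun p : Fin N × Fin n => |A p.1 p.2|)
    (fun p _ => abs_nonneg _)
  simpa [sq_abs, sq] using this

theorem vnorm_le_sum (v : Fin N → ℝ) : vnorm v ≤ ∑ a, |v a| := by
  rw [vnorm]
  refine Real.sqrt_le_iff.2 ⟨Finset.sum_nonneg fun a _ => abs_nonneg _, ?_⟩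
  have := Finset.sum_sq_le_sq_sum_of_nonneg (s := Finset.univ) (f := fun a => |v a|)
    (fun p _ => abs_nonneg _)
  simpa [sq_abs] using this

theorem vnorm_sq (v : Fin N → ℝ) : vnorm v ^ 2 = ∑ a, v a ^ 2 := by
  rw [vnorm, Real.sq_sqrt (Finset.sum_nonneg fun a _ => sq_nonneg _)]

theorem vnorm_nonneg (v : Fin N → ℝ) : 0 ≤ vnorm v := Real.sqrt_nonneg _

theorem vnorm_cont : Continuous (vnorm : (Fin N → ℝ) → ℝ) := by
  unfold vnorm; fun_prop

theorem mnorm_int {Ω : Set (EVec n)} {D : EVec n → Fin N → Fin n → ℝ}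
    (hD : IntegrableOn D Ω volume) : IntegrableOn (fun x => mnorm (D x)) Ω volume := by
  have h : Integrable (fun x => ∑ a, ∑ i, |D x a i|) (volume.restrict Ω) :=
    integrable_finsetSum _ fun a _ => integrable_finsetSum _ fun i _ => ((hD.eval a).eval i).abs
  refine h.mono' (mnorm_cont.comp_aestronglyMeasurable hD.1) (ae_of_all _ fun x => ?_)
  rw [Real.norm_of_nonneg (mnorm_nonneg _)]
  exact mnorm_le_sum _

theorem vnorm_int {Ω : Set (EVec n)} {u : EVec n → Fin N → ℝ}
    (hD : IntegrableOn u Ω volume) : IntegrableOn (fun x => vnorm (u x)) Ω volume := by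
  have h : Integrable (fun x => ∑ a, |u x a|) (volume.restrict Ω) :=
    integrable_finsetSum _ fun a _ => (hD.eval a).abs
  refine h.mono' (vnorm_cont.comp_aestronglyMeasurable hD.1) (ae_of_all _ fun x => ?_)
  rw [Real.norm_of_nonneg (vnorm_nonneg _)]
  exact vnorm_le_sum _

theorem f_facts (L : ℝ) (f f' : ℝ → ℝ)
    (hderiv : ∀ t ∈ Set.Ici (0:ℝ), HasDerivWithinAt f (f' t) (Set.Ici 0) t)
    (hconv : ConvexOn ℝ (Set.Ici 0) f)
    (hf0 : f 0 = 0) (hf'0 : f' 0 = 0)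
    (hup : ∀ t ∈ Set.Ici (0:ℝ), f t ≤ L * (t + 1)) :
    (∀ t, 0 ≤ t → 0 ≤ f t) ∧ (∀ s t, 0 ≤ s → 0 ≤ t → |f s - f t| ≤ L * |s - t|) := by
  have hpos : ∀ t, 0 ≤ t → 0 ≤ f t := by
    intro t ht
    rcases ht.eq_or_lt with rfl | ht
    · rw [hf0]
    have := hconv.le_slope_of_hasDerivWithinAt (x := 0) (y := t) (by simp) ht.le ht (hderiv 0 (by simp))
    rw [hf'0, slope_def_field, hf0, sub_zero, sub_zero] at this
    by_contra h
    push Not at h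
    exact absurd (div_neg_of_neg_of_pos h ht) (not_lt.2 this)
  have hmain : ∀ s t, 0 ≤ s → s < t → f s ≤ f t ∧ f t - f s ≤ L * (t - s) := by
    intro s t hs hst
    have ht : 0 < t := hs.trans_lt hst
    constructor
    · have := hconv.2 (show (0:ℝ) ∈ Ici (0:ℝ) by simp) (show t ∈ Ici (0:ℝ) from ht.le)
        (show 0 ≤ 1 - s / t by rw [sub_nonneg, div_le_one ht]; exact hst.le) (show 0 ≤ s / t by positivity) (by ring)
      simp only [smul_eq_mul, mul_zero, zero_add, hf0, div_mul_cancel₀ s ht.ne'] at this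
      refine this.trans ?_
      exact mul_le_of_le_one_left (hpos t ht.le) ((div_le_one ht).2 hst.le)
    · have hr : ∀ᶠ r in atTop, f t - f s ≤ (t - s) * (L * ((r + 1) / (r - s))) := by
        filter_upwards [eventually_gt_atTop t] with r hr
        have h1 := hconv.secant_mono (a := s) (x := t) (y := r) hs ht.le (ht.trans hr).le hst.ne'
          (hst.trans hr).ne' hr.le
        have hts : 0 < t - s := sub_pos.2 hst
        have hrs : 0 < r - s := sub_pos.2 (hst.trans hr)
        rw [div_le_iff₀ hts] at h1
        refine h1.trans ?_
        rw [mul_comm]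
        gcongr
        rw [← mul_div_assoc]
        gcongr
        have := hup r (ht.trans hr).le
        have := hpos s hs
        linarith
      have hlim : Tendsto (fun r : ℝ => (t - s) * (L * ((r + 1) / (r - s)))) atTop (𝓝 ((t - s) * (L * 1))) := by
        refine Tendsto.const_mul _ (Tendsto.const_mul _ ?_)
        have h2 : Tendsto (fun r : ℝ => 1 + (s + 1) * (r - s)⁻¹) atTop (𝓝 (1 + (s + 1) * 0)) :=
          tendsto_const_nhds.add (Tendsto.const_mul _ (tendsto_inv_atTop_zero.comp
            (tendsto_atTop_add_const_right _ _ tendsto_id)))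
        rw [mul_zero, add_zero] at h2
        refine h2.congr' ?_
        filter_upwards [eventually_gt_atTop s] with r hr
        have : r - s ≠ 0 := (sub_pos.2 hr).ne'
        field_simp
        ring
      have := ge_of_tendsto hlim hr
      linarith
  refine ⟨hpos, fun s t hs ht => ?_⟩
  rcases lt_trichotomy s t with h | h | h
  · obtain ⟨h1, h2⟩ := hmain s t hs h
    rw [abs_of_nonpos (by linarith), abs_of_neg (by linarith)]; linarith
  · simp [h]
  · obtain ⟨h1, h2⟩ := hmain t s ht h
    rw [abs_of_nonneg (by linarith), abs_of_pos (by linarith)]; linarith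

theorem f_lower (f : ℝ → ℝ) (hpos : ∀ t, 0 ≤ t → 0 ≤ f t) (finf m : ℝ)
    (hfinf : Tendsto (fun t => f t / t) atTop (nhds finf)) (hm : m < finf) (hm0 : 0 ≤ m) :
    ∃ C, ∀ t, 0 ≤ t → m * t - C ≤ f t := by
  obtain ⟨t0, h0⟩ := eventually_atTop.1 ((hfinf.eventually (lt_mem_nhds hm)).and (eventually_gt_atTop 0))
  refine ⟨m * max t0 0, fun t ht => ?_⟩
  rcases le_total t0 t with h | h
  · obtain ⟨h1, h2⟩ := h0 t h
    rw [lt_div_iff₀ h2] at h1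
    have : 0 ≤ m * max t0 0 := by positivity
    linarith
  · have : m * t ≤ m * max t0 0 := by gcongr; exact h.trans (le_max_left _ _)
    linarith [hpos t ht]

set_option maxHeartbeats 1000000 in
theorem FF_facts {Ω : Set (EVec n)} (hΩf : volume Ω ≠ ∞) {f : ℝ → ℝ} {L : ℝ} (hL : 0 ≤ L)
    (hpos : ∀ t, 0 ≤ t → 0 ≤ f t) (hf0 : f 0 = 0)
    (hlip : ∀ s t, 0 ≤ s → 0 ≤ t → |f s - f t| ≤ L * |s - t|) {finf : ℝ}
    (hfinf : Tendsto (fun t => f t / t) atTop (nhds finf))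
    (T₀ : EVec n → Fin N → Fin n → ℝ)
    (hTmeas : AEStronglyMeasurable T₀ (volume.restrict Ω))
    (hTsmall : linfNormOn Ω T₀ < ENNReal.ofReal finf) :
    ∃ B c C : ℝ, 0 < c ∧ 0 ≤ B ∧
      (∀ D : EVec n → Fin N → Fin n → ℝ, IntegrableOn D Ω volume →
        c * ∫ x in Ω, mnorm (D x) ≤ FF Ω f T₀ D + C) ∧
      (∀ D D' : EVec n → Fin N → Fin n → ℝ, IntegrableOn D Ω volume → IntegrableOn D' Ω volume →
        FF Ω f T₀ D ≤ FF Ω f T₀ D' + B * ∫ x in Ω, mnorm (D x - D' x)) := by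
  set M := (linfNormOn Ω T₀).toReal with hM
  have hMf : linfNormOn Ω T₀ ≠ ∞ := (hTsmall.trans_le le_top).ne
  have hM0 : 0 ≤ M := ENNReal.toReal_nonneg
  have hMlt : M < finf := by
    by_contra h
    push Not at h
    have := ENNReal.ofReal_le_ofReal h
    rw [hM, ENNReal.ofReal_toReal hMf] at this
    exact absurd hTsmall (not_lt.2 this)
  have hTb : ∀ᵐ x ∂(volume.restrict Ω), mnorm (T₀ x) ≤ M := by
    filter_upwards [ENNReal.ae_le_essSup (μ := volume.restrict Ω) (fun x => ENNReal.ofReal (mnorm (T₀ x)))] with x hx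
    exact (ENNReal.ofReal_le_iff_le_toReal hMf).1 hx
  obtain ⟨C0, hC0⟩ := f_lower f hpos finf ((M + finf) / 2) hfinf (by linarith) (by linarith)
  set c := (M + finf) / 2 - M with hc
  have hfc : Continuous (fun t => f |t|) := by
    have : LipschitzWith L.toNNReal (fun t => f |t|) := by
      refine LipschitzWith.of_dist_le_mul fun s t => ?_
      rw [Real.dist_eq, Real.dist_eq, Real.coe_toNNReal L hL]
      refine (hlip _ _ (abs_nonneg _) (abs_nonneg _)).trans ?_
      exact mul_le_mul_of_nonneg_left (abs_abs_sub_abs_le s t) hL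
    exact this.continuous
  haveI : IsFiniteMeasure (volume.restrict Ω) := ⟨by simpa using hΩf.lt_top⟩
  have hint : ∀ D : EVec n → Fin N → Fin n → ℝ, IntegrableOn D Ω volume →
      IntegrableOn (fun x => f (mnorm (D x)) - mdot (T₀ x) (D x)) Ω volume := by
    intro D hD
    refine ((mnorm_int hD).const_mul (L + M)).mono' ?_ ?_
    · refine AEStronglyMeasurable.sub ?_ ?_
      · have := hfc.comp_aestronglyMeasurable (mnorm_cont.comp_aestronglyMeasurable hD.1)
        refine this.congr (ae_of_all _ fun x => ?_)
        simp only [Function.comp, abs_of_nonneg (mnorm_nonneg _)]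
      · exact mdot_cont.comp_aestronglyMeasurable (AEStronglyMeasurable.prodMk hTmeas hD.1)
    · filter_upwards [hTb] with x hx
      refine (norm_sub_le _ _).trans ?_
      rw [add_mul, Real.norm_eq_abs, Real.norm_eq_abs]
      refine add_le_add ?_ ((mdot_abs_le _ _).trans (mul_le_mul_of_nonneg_right hx (mnorm_nonneg _)))
      have := hlip (mnorm (D x)) 0 (mnorm_nonneg _) le_rfl
      rwa [hf0, sub_zero, sub_zero, abs_of_nonneg (mnorm_nonneg (D x))] at this
  refine ⟨L + M, c, C0 * (volume Ω).toReal, by rw [hc]; linarith, by linarith, fun D hD => ?_, fun D D' hD hD' => ?_⟩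
  · have h1 : ∫ x in Ω, (c * mnorm (D x) - C0) ≤ FF Ω f T₀ D := by
      refine integral_mono_ae (((mnorm_int hD).const_mul c).sub (integrable_const C0)) (hint D hD) ?_
      filter_upwards [hTb] with x hx
      have h2 := hC0 (mnorm (D x)) (mnorm_nonneg _)
      have h3 := (le_abs_self _).trans ((mdot_abs_le (T₀ x) (D x)).trans (mul_le_mul_of_nonneg_right hx (mnorm_nonneg _)))
      simp only [hc]
      linarith
    rw [integral_sub ((mnorm_int hD).const_mul c) (integrable_const C0), integral_const_mul] at h1
    simp [Measure.real] at h1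
    linarith
  · have hDD : IntegrableOn (fun x => D x - D' x) Ω volume := hD.sub hD'
    rw [FF, FF, ← integral_const_mul, ← integral_add (hint D' hD') ((mnorm_int hDD).const_mul _)]
    refine integral_mono_ae (hint D hD) ((hint D' hD').add ((mnorm_int hDD).const_mul _)) ?_
    filter_upwards [hTb] with x hx
    have h1 := (le_abs_self _).trans (hlip (mnorm (D x)) (mnorm (D' x)) (mnorm_nonneg _) (mnorm_nonneg _))
    have h2 := mul_le_mul_of_nonneg_left (mnorm_sub_abs (D x) (D' x)) hL
    have h3 := (neg_abs_le _).trans' (neg_le_neg ((mdot_abs_le (T₀ x) (D x - D' x)).trans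
      (mul_le_mul_of_nonneg_right hx (mnorm_nonneg _))))
    have h4 := mdot_sub (T₀ x) (D x) (D' x)
    linarith
end

open MeasureTheory Filter Topology Set
open scoped ENNReal RealInnerProductSpace NNReal

section
variable {n N : ℕ}

theorem lip_dom_patch {Ω : Set (EVec n)} (hΩ : IsLipschitzDomain Ω) :
    ∀ x ∈ closure Ω, Nonempty (LPatch Ω x) := by
  obtain ⟨ho, -, -, hfr⟩ := hΩ
  intro x hx
  by_cases hxi : x ∈ Ω
  · exact lpatch_interior ho hxi
  · have : x ∈ frontier Ω := by rw [ho.frontier_eq]; exact ⟨hx, hxi⟩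
    obtain ⟨U, h, hinv, K, e, he, hU, hxU, hh, hhi, hl, hm⟩ := hfr x this
    exact lpatch_boundary he hU hxU hh hhi hl hm

noncomputable def gm : (Fin n → ℝ) →L[ℝ] (EVec n →L[ℝ] ℝ) :=
  ∑ i, (ContinuousLinearMap.proj (R := ℝ) (φ := fun _ : Fin n => ℝ) i).smulRight
    (EuclideanSpace.proj i : EVec n →L[ℝ] ℝ)

theorem gm_apply (r : Fin n → ℝ) (v : EVec n) : gm r v = ∑ i, r i * v i := by
  simp [gm]

theorem gm_single (r : Fin n → ℝ) (i : Fin n) : gm r (EuclideanSpace.single i 1) = r i := by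
  rw [gm_apply]
  simp

theorem gm_norm_le (A : Fin N → Fin n → ℝ) (a : Fin N) : ‖gm (A a)‖ ≤ n * mnorm A := by
  refine ContinuousLinearMap.opNorm_le_bound _ (by have := mnorm_nonneg A; positivity) fun v => ?_
  rw [gm_apply]
  refine (norm_sum_le _ _).trans ?_
  calc _ ≤ ∑ i : Fin n, mnorm A * ‖v‖ := by
        refine Finset.sum_le_sum fun i _ => ?_
        rw [norm_mul]
        exact mul_le_mul (abs_le_mnorm A a i) (PiLp.norm_apply_le v i) (norm_nonneg _) (mnorm_nonneg _)
    _ = _ := by simp [mul_assoc]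

theorem weakD_of {Ω : Set (EVec n)} {u : EVec n → Fin N → ℝ} {Du : EVec n → Fin N → Fin n → ℝ}
    (h : HasWeakDerivOn Ω u Du) (a : Fin N) :
    WeakD volume Ω (fun x => u x a) (fun x => gm (Du x a)) := by
  obtain ⟨hu, hD, hw⟩ := h
  intro φ hφ hφc hφs v
  have hcf : Continuous (fderiv ℝ φ) := hφ.continuous_fderiv one_ne_zero
  obtain ⟨B, hB⟩ := (hφc.fderiv ℝ).exists_bound_of_continuous hcf
  obtain ⟨B', hB'⟩ := hφc.exists_bound_of_continuous hφ.continuous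
  have hv : v = ∑ i, v i • (EuclideanSpace.single i (1:ℝ) : EVec n) := by
    ext j; simp [Finset.sum_apply, Pi.single_apply]
  have i1 : ∀ i : Fin n, Integrable (fun x => u x a * fderiv ℝ φ x (EuclideanSpace.single i 1))
      (volume.restrict Ω) := fun i => by
    refine (hu.eval a).mul_bdd (c := B) ?_ (ae_of_all _ fun x => ?_)
    · exact (hcf.clm_apply continuous_const).aestronglyMeasurable
    · refine (ContinuousLinearMap.le_opNorm _ _).trans ?_
      simpa using hB x
  have i2 : ∀ i : Fin n, Integrable (fun x => Du x a i * φ x) (volume.restrict Ω) := fun i =>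
    ((hD.eval a).eval i).mul_bdd (c := B') hφ.continuous.aestronglyMeasurable (ae_of_all _ hB')
  have e1 : ∀ x, u x a * fderiv ℝ φ x v =
      ∑ i, v i * (u x a * fderiv ℝ φ x (EuclideanSpace.single i 1)) := by
    intro x
    conv_lhs => rw [hv]
    rw [map_sum, Finset.mul_sum]
    refine Finset.sum_congr rfl fun i _ => ?_
    rw [map_smul, smul_eq_mul]; ring
  have e2 : ∀ x, gm (Du x a) v * φ x = ∑ i, v i * (Du x a i * φ x) := by
    intro x
    rw [gm_apply, Finset.sum_mul]
    refine Finset.sum_congr rfl fun i _ => ?_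
    ring
  simp_rw [e1, e2]
  rw [integral_finsetSum _ fun i _ => (i1 i).const_mul _, integral_finsetSum _ fun i _ => (i2 i).const_mul _,
    ← Finset.sum_neg_distrib]
  refine Finset.sum_congr rfl fun i _ => ?_
  rw [integral_const_mul, integral_const_mul, hw φ hφ hφc hφs a i, mul_neg]

theorem gm_int {Ω : Set (EVec n)} {Du : EVec n → Fin N → Fin n → ℝ}
    (hD : IntegrableOn Du Ω volume) (a : Fin N) : IntegrableOn (fun x => gm (Du x a)) Ω volume :=
  gm.integrable_comp (hD.eval a)

theorem intOn_bdd {α : Type*} [MeasurableSpace α] {m : Measure α} {F : Type*} [NormedAddCommGroup F]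
    {s : Set α} {g : α → F} {M : ℝ} (hs : m s ≠ ∞) (hg : AEStronglyMeasurable g (m.restrict s))
    (h : ∀ᵐ x ∂(m.restrict s), ‖g x‖ ≤ M) : IntegrableOn g s m := by
  haveI : IsFiniteMeasure (m.restrict s) := ⟨by simpa using hs.lt_top⟩
  exact Integrable.mono' (integrable_const M) hg h

theorem lip_W12 {Ω : Set (EVec n)} (hΩ : IsOpen Ω) (hb : Bornology.IsBounded Ω) {w : Fin N → EVec n → ℝ}
    {K : Fin N → ℝ≥0} (hw : ∀ a, LipschitzWith (K a) (w a)) :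
    MemW12 Ω (fun x a => w a x) (fun x a i => fderiv ℝ (w a) x (EuclideanSpace.single i 1)) := by
  have hf : volume Ω ≠ ∞ := hb.measure_lt_top.ne
  have hm : MeasurableSet Ω := hΩ.measurableSet
  have hwb : ∀ a, ∃ b : ℝ, ∀ x ∈ Ω, ‖w a x‖ ≤ b := fun a => by
    obtain ⟨b, hb⟩ := ((hw a).isBounded_image hb).exists_norm_le
    exact ⟨b, fun x hx => hb _ (mem_image_of_mem _ hx)⟩
  choose b hb using hwb
  have hDb : ∀ a i x, ‖fderiv ℝ (w a) x (EuclideanSpace.single i 1)‖ ≤ K a := fun a i x => by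
    refine (ContinuousLinearMap.le_opNorm _ _).trans ?_
    simpa using norm_fderiv_le_of_lipschitz ℝ (hw a) (x₀ := x)
  have m1 : ∀ a, AEStronglyMeasurable (w a) (volume.restrict Ω) := fun a => (hw a).continuous.aestronglyMeasurable
  have m2 : ∀ a i, AEStronglyMeasurable (fun x => fderiv ℝ (w a) x (EuclideanSpace.single i 1))
      (volume.restrict Ω) := fun a i =>
    (ContinuousLinearMap.apply ℝ ℝ (EuclideanSpace.single i 1 : EVec n)).continuous.comp_aestronglyMeasurable
      (sm_fderiv' (w a)).aestronglyMeasurable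
  have i1 : ∀ a, IntegrableOn (w a) Ω volume := fun a =>
    intOn_bdd (M := b a) hf (m1 a) ((ae_restrict_mem hm).mono (hb a))
  have i2 : ∀ a i, IntegrableOn (fun x => fderiv ℝ (w a) x (EuclideanSpace.single i 1)) Ω volume := fun a i =>
    intOn_bdd (M := K a) hf (m2 a i) (ae_of_all _ fun x => hDb a i x)
  have i3 : IntegrableOn (fun x a => w a x) Ω volume := Integrable.of_eval i1
  have i4 : IntegrableOn (fun x a i => fderiv ℝ (w a) x (EuclideanSpace.single i 1)) Ω volume :=
    Integrable.of_eval fun a => Integrable.of_eval fun i => i2 a i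
  refine ⟨⟨i3, i4, ?_⟩, ?_, ?_⟩
  · intro φ hφ hφc hφs a i
    obtain ⟨D, hD⟩ := hφ.lipschitzWith_of_hasCompactSupport hφc one_ne_zero
    have key := LipschitzWith.integral_lineDeriv_mul_eq (μ := volume) (hw a) hD hφc (EuclideanSpace.single i 1)
    have hz : ∀ x, x ∉ Ω → φ x = 0 := fun x hx => image_eq_zero_of_notMem_tsupport fun h => hx (hφs h)
    have hz' : ∀ x, x ∉ Ω → fderiv ℝ φ x = 0 := fun x hx =>
      image_eq_zero_of_notMem_tsupport fun h => hx (hφs (tsupport_fderiv_subset ℝ h))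
    rw [setIntegral_eq_integral_of_forall_compl_eq_zero (fun x hx => by simp [hz' x hx]),
      setIntegral_eq_integral_of_forall_compl_eq_zero (fun x hx => by simp [hz x hx])]
    have e1 : ∫ x, fderiv ℝ (w a) x (EuclideanSpace.single i 1) * φ x =
        ∫ x, lineDeriv ℝ (w a) x (EuclideanSpace.single i 1) * φ x := by
      refine integral_congr_ae ?_
      filter_upwards [(hw a).ae_differentiableAt (μ := volume)] with x hx
      rw [hx.lineDeriv_eq_fderiv]
    rw [e1, key, ← integral_neg]
    refine integral_congr_ae (ae_of_all _ fun x => ?_)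
    simp only
    rw [((hφ.differentiable one_ne_zero) x).lineDeriv_eq_fderiv, map_neg]
    ring
  · have : ∀ x ∈ Ω, ‖vnorm (fun a => w a x) ^ 2‖ ≤ ∑ a, b a ^ 2 := fun x hx => by
      rw [Real.norm_of_nonneg (sq_nonneg _), vnorm_sq]
      refine Finset.sum_le_sum fun a _ => ?_
      exact sq_le_sq' (neg_le_of_abs_le (hb a x hx)) (le_of_abs_le (hb a x hx))
    exact intOn_bdd hf ((vnorm_cont.comp_aestronglyMeasurable i3.1).pow 2)
      ((ae_restrict_mem hm).mono this)
  · have : ∀ x, ‖mnorm (fun a i => fderiv ℝ (w a) x (EuclideanSpace.single i 1)) ^ 2‖ ≤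
        (∑ a, ∑ _i : Fin n, (K a : ℝ)) ^ 2 := fun x => by
      rw [Real.norm_of_nonneg (sq_nonneg _)]
      refine pow_le_pow_left₀ (mnorm_nonneg _) ((mnorm_le_sum _).trans ?_) 2
      exact Finset.sum_le_sum fun a _ => Finset.sum_le_sum fun i _ => hDb a i x
    exact intOn_bdd hf ((mnorm_cont.comp_aestronglyMeasurable i4.1).pow 2)
      (ae_of_all _ this)

theorem dense_W12 {Ω : Set (EVec n)} (hΩ : IsLipschitzDomain Ω) (hb : Bornology.IsBounded Ω)
    {w : EVec n → Fin N → ℝ} {Dw : EVec n → Fin N → Fin n → ℝ} (h : HasWeakDerivOn Ω w Dw)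
    {ε : ℝ} (hε : 0 < ε) : ∃ w' Dw', MemW12 Ω w' Dw' ∧ ∫ x in Ω, mnorm (Dw' x - Dw x) ≤ ε := by
  set ε' : ℝ := ε / (N * n + 1) with hε'
  have hε'0 : 0 < ε' := by positivity
  have hx : ∀ a, ∃ v K, LipschitzWith K v ∧
      ∫ x in Ω, ‖fderiv ℝ v x - gm (Dw x a)‖ ≤ ε' := by
    intro a
    have g1 : IntegrableOn (fun x => w x a) Ω volume := h.1.eval a
    have g2 := gm_int h.2.1 a
    obtain ⟨v, K, hK, -, h2⟩ := dense_lip (volume : Measure (EVec n)) hΩ.1 hb (lip_dom_patch hΩ) (p := 1) le_rfl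
      (by simp) g1 g2 (memLp_one_iff_integrable.2 g1) (memLp_one_iff_integrable.2 g2) (weakD_of h a)
      (ε := ENNReal.ofReal ε') (by simpa using hε'0)
    refine ⟨v, K, hK, ?_⟩
    have g3 : AEStronglyMeasurable (fun x => fderiv ℝ v x - gm (Dw x a)) (volume.restrict Ω) :=
      (sm_fderiv' v).aestronglyMeasurable.sub g2.1
    rw [integral_norm_eq_lintegral_enorm g3, ← eLpNorm_one_eq_lintegral_enorm]
    exact ENNReal.toReal_le_of_le_ofReal hε'0.le h2
  choose v K hK hv using hx
  have hW := lip_W12 hΩ.1 hb hK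
  refine ⟨_, _, hW, ?_⟩
  have hDi := hW.1.2.1
  have gi : ∀ a, IntegrableOn (fun x => fderiv ℝ (v a) x - gm (Dw x a)) Ω volume := fun a => by
    refine Integrable.sub ?_ (gm_int h.2.1 a)
    exact intOn_bdd (M := K a) hb.measure_lt_top.ne (sm_fderiv' (v a)).aestronglyMeasurable
      (ae_of_all _ fun x => norm_fderiv_le_of_lipschitz ℝ (hK a))
  have hle : ∫ x in Ω, mnorm ((fun a i => fderiv ℝ (v a) x (EuclideanSpace.single i 1)) - Dw x) ≤
      ∫ x in Ω, ∑ a, ∑ _i : Fin n, ‖fderiv ℝ (v a) x - gm (Dw x a)‖ := by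
    refine integral_mono (mnorm_int (hDi.sub h.2.1)) 
      (integrable_finsetSum _ fun a _ => integrable_finsetSum _ fun i _ => (gi a).norm) fun x => ?_
    refine (mnorm_le_sum _).trans (Finset.sum_le_sum fun a _ => Finset.sum_le_sum fun i _ => ?_)
    have := ContinuousLinearMap.le_opNorm (fderiv ℝ (v a) x - gm (Dw x a)) (EuclideanSpace.single i 1)
    rw [ContinuousLinearMap.sub_apply, gm_single] at this
    simpa using this
  refine hle.trans ?_
  rw [integral_finsetSum _ fun a _ => integrable_finsetSum _ fun i _ => (gi a).norm]
  calc _ ≤ ∑ a : Fin N, ∑ _i : Fin n, ε' := by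
        refine Finset.sum_le_sum fun a _ => ?_
        rw [integral_finsetSum _ fun i _ => (gi a).norm]
        exact Finset.sum_le_sum fun i _ => hv a
    _ = (N * n) * ε' := by simp; ring
    _ ≤ (N * n + 1) * ε' := by gcongr; linarith
    _ = ε := by rw [hε']; field_simp

theorem weak_poinc_real {Ω : Set (EVec n)} (hΩ : IsLipschitzDomain Ω) (hb : Bornology.IsBounded Ω)
    {p : ℝ≥0∞} (hp1 : 1 ≤ p) (hp : p ≠ ∞) : ∃ C : ℝ, 0 ≤ C ∧
    ∀ (u : EVec n → ℝ) (G : EVec n → EVec n →L[ℝ] ℝ), IntegrableOn u Ω → IntegrableOn G Ω →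
      MemLp u p (volume.restrict Ω) → MemLp G p (volume.restrict Ω) → WeakD volume Ω u G → ∫ x in Ω, u x = 0 →
      ∫ x in Ω, ‖u x‖ ^ p.toReal ≤ C * ∫ x in Ω, ‖G x‖ ^ p.toReal := by
  obtain ⟨C, hC, h⟩ := weak_poinc (volume : Measure (EVec n)) hΩ.1 hb hΩ.2.2.1 (lip_dom_patch hΩ) hp1 hp
  have hp0 : p ≠ 0 := by intro h; simp [h] at hp1
  have hq : 0 < p.toReal := ENNReal.toReal_pos hp0 hp
  refine ⟨C.toReal ^ p.toReal, by positivity, fun u G hu hG hup hGp hw hm => ?_⟩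
  have k := h u G hu hG hup hGp hw hm
  have X0 : 0 ≤ ∫ x in Ω, ‖u x‖ ^ p.toReal := integral_nonneg fun x => by positivity
  have Y0 : 0 ≤ ∫ x in Ω, ‖G x‖ ^ p.toReal := integral_nonneg fun x => by positivity
  rw [hup.eLpNorm_eq_integral_rpow_norm hp0 hp, hGp.eLpNorm_eq_integral_rpow_norm hp0 hp,
    ← ENNReal.ofReal_toReal hC, ← ENNReal.ofReal_mul ENNReal.toReal_nonneg,
    ENNReal.ofReal_le_ofReal_iff (by positivity)] at k
  have k2 := Real.rpow_le_rpow (by positivity) k hq.le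
  rwa [Real.mul_rpow ENNReal.toReal_nonneg (by positivity), ← Real.rpow_mul X0, ← Real.rpow_mul Y0,
    inv_mul_cancel₀ hq.ne', Real.rpow_one, Real.rpow_one] at k2

theorem vec_poinc (N : ℕ) {Ω : Set (EVec n)} (hΩ : IsLipschitzDomain Ω) (hb : Bornology.IsBounded Ω) :
    ∃ C : ℝ, 0 ≤ C ∧ ∀ (u : EVec n → Fin N → ℝ) (Du : EVec n → Fin N → Fin n → ℝ), MemW12 Ω u Du →
      ZeroMean Ω u → ∫ x in Ω, vnorm (u x) ≤ C * ∫ x in Ω, mnorm (Du x) ∧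
        ∫ x in Ω, vnorm (u x) ^ 2 ≤ C * ∫ x in Ω, mnorm (Du x) ^ 2 := by
  obtain ⟨C1, hC1, h1⟩ := weak_poinc_real hΩ hb (p := 1) le_rfl (by simp)
  obtain ⟨C2, hC2, h2⟩ := weak_poinc_real hΩ hb (p := 2) (by norm_num) (by simp)
  refine ⟨N * (C1 * n) + N * (C2 * n ^ 2), by positivity, fun u Du hW hz => ?_⟩
  obtain ⟨hWD, hu2, hD2⟩ := hW
  have hu := hWD.1
  have hD := hWD.2.1
  have ui : ∀ a, IntegrableOn (fun x => u x a) Ω := fun a => hu.eval a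
  have Gi := fun a => gm_int hD a
  have u2 : ∀ a, IntegrableOn (fun x => u x a ^ 2) Ω := fun a => by
    refine hu2.mono' ((ui a).1.pow 2) (ae_of_all _ fun x => ?_)
    rw [Real.norm_of_nonneg (sq_nonneg _), vnorm_sq]
    exact Finset.single_le_sum (f := fun a => u x a ^ 2) (fun a _ => sq_nonneg _) (Finset.mem_univ a)
  have Gle : ∀ a x, ‖gm (Du x a)‖ ^ 2 ≤ n ^ 2 * mnorm (Du x) ^ 2 := fun a x => by
    rw [← mul_pow]; exact pow_le_pow_left₀ (norm_nonneg _) (gm_norm_le _ a) 2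
  have G2 : ∀ a, IntegrableOn (fun x => ‖gm (Du x a)‖ ^ 2) Ω := fun a => by
    refine (hD2.const_mul ((n:ℝ) ^ 2)).mono' ((Gi a).1.norm.pow 2) (ae_of_all _ fun x => ?_)
    rw [Real.norm_of_nonneg (sq_nonneg _)]
    exact Gle a x
  have m0 : 0 ≤ ∫ x in Ω, mnorm (Du x) := integral_nonneg fun x => mnorm_nonneg _
  have m2 : 0 ≤ ∫ x in Ω, mnorm (Du x) ^ 2 := integral_nonneg fun x => sq_nonneg _
  have a1 : ∀ a, ∫ x in Ω, |u x a| ≤ C1 * n * ∫ x in Ω, mnorm (Du x) := fun a => by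
    have := h1 (fun x => u x a) (fun x => gm (Du x a)) (ui a) (Gi a) (memLp_one_iff_integrable.2 (ui a))
      (memLp_one_iff_integrable.2 (Gi a)) (weakD_of hWD a) (hz a)
    simp only [ENNReal.toReal_one, Real.rpow_one, Real.norm_eq_abs] at this
    refine this.trans ?_
    rw [mul_assoc]
    refine mul_le_mul_of_nonneg_left ?_ hC1
    rw [← integral_const_mul]
    exact integral_mono (Gi a).norm ((mnorm_int hD).const_mul _) fun x => gm_norm_le _ a
  have a2 : ∀ a, ∫ x in Ω, u x a ^ 2 ≤ C2 * n ^ 2 * ∫ x in Ω, mnorm (Du x) ^ 2 := fun a => by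
    have := h2 (fun x => u x a) (fun x => gm (Du x a)) (ui a) (Gi a)
      ((memLp_two_iff_integrable_sq (ui a).1).2 (u2 a))
      ((memLp_two_iff_integrable_sq_norm (Gi a).1).2 (G2 a)) (weakD_of hWD a) (hz a)
    simp only [ENNReal.toReal_ofNat, Real.rpow_ofNat, Real.norm_eq_abs, sq_abs] at this
    refine this.trans ?_
    rw [mul_assoc]
    refine mul_le_mul_of_nonneg_left ?_ hC2
    rw [← integral_const_mul]
    exact integral_mono (G2 a) (hD2.const_mul _) fun x => Gle a x
  constructor
  · calc ∫ x in Ω, vnorm (u x) ≤ ∫ x in Ω, ∑ a, |u x a| :=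
          integral_mono (vnorm_int hu) (integrable_finsetSum _ fun a _ => (ui a).abs) fun x => vnorm_le_sum _
      _ = ∑ a, ∫ x in Ω, |u x a| := integral_finsetSum _ fun a _ => (ui a).abs
      _ ≤ ∑ a : Fin N, C1 * n * ∫ x in Ω, mnorm (Du x) := Finset.sum_le_sum fun a _ => a1 a
      _ = N * (C1 * n) * ∫ x in Ω, mnorm (Du x) := by simp; ring
      _ ≤ _ := by
          refine mul_le_mul_of_nonneg_right ?_ m0
          have : 0 ≤ (N:ℝ) * (C2 * n ^ 2) := by positivity
          linarith
  · calc ∫ x in Ω, vnorm (u x) ^ 2 = ∫ x in Ω, ∑ a, u x a ^ 2 := by simp_rw [vnorm_sq]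
      _ = ∑ a, ∫ x in Ω, u x a ^ 2 := integral_finsetSum _ fun a _ => u2 a
      _ ≤ ∑ a : Fin N, C2 * n ^ 2 * ∫ x in Ω, mnorm (Du x) ^ 2 := Finset.sum_le_sum fun a _ => a2 a
      _ = N * (C2 * n ^ 2) * ∫ x in Ω, mnorm (Du x) ^ 2 := by simp; ring
      _ ≤ _ := by
          refine mul_le_mul_of_nonneg_right ?_ m2
          have : 0 ≤ (N:ℝ) * (C1 * n) := by positivity
          linarith
end

open MeasureTheory Filter Topology Set
open scoped ENNReal RealInnerProductSpace NNReal

/-- **Corollary 3.2.** The minimisers `u_k` of the regularised functionals `𝔉_k` (with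
zero mean) form a minimising sequence for `𝔉` in `W^{1,1}(Ω;ℝ^N)`, with
`lim_k inf 𝔉_k = inf 𝔉`; moreover `k^{-1/2}∇u_k → 0` in `L²(Ω;ℝ^{N×n})` and
`sup_k (‖u_k‖_{W^{1,1}} + k⁻¹‖u_k‖²_{W^{1,2}}) < ∞`. -/
theorem approximate_minimising_sequence
    {n N : ℕ} (Ω : Set (EVec n))
    (hΩ : IsLipschitzDomain Ω) (hΩbdd : Bornology.IsBounded Ω)
    (ν L : ℝ) (hν : 0 < ν) (hνL : ν ≤ L)
    (f f' : ℝ → ℝ)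
    (hderiv : ∀ t ∈ Set.Ici (0:ℝ), HasDerivWithinAt f (f' t) (Set.Ici 0) t)
    (hf'cont : ContinuousOn f' (Set.Ici 0))
    (hconv : ConvexOn ℝ (Set.Ici 0) f)
    (hf0 : f 0 = 0) (hf'0 : f' 0 = 0)
    (hgrowth : ∀ t ∈ Set.Ici (0:ℝ), ν * t - L ≤ f t ∧ f t ≤ L * (t + 1))
    (finf : ℝ) (hfinf : Filter.Tendsto (fun t => f t / t) Filter.atTop (nhds finf))
    (T₀ : EVec n → Fin N → Fin n → ℝ)
    (hTmeas : AEStronglyMeasurable T₀ (volume.restrict Ω))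
    (hTsmall : linfNormOn Ω T₀ < ENNReal.ofReal finf)
    (u : ℕ → EVec n → Fin N → ℝ) (Du : ℕ → EVec n → Fin N → Fin n → ℝ)
    (hmem : ∀ k, 0 < k → MemW12 Ω (u k) (Du k))
    (hzero : ∀ k, 0 < k → ZeroMean Ω (u k))
    (hmin : ∀ k, 0 < k →
      ∀ (w : EVec n → Fin N → ℝ) (Dw : EVec n → Fin N → Fin n → ℝ),
        MemW12 Ω w Dw → FFk Ω f T₀ k (Du k) ≤ FFk Ω f T₀ k Dw) :
    Filter.Tendsto (fun k => FF Ω f T₀ (Du k)) Filter.atTop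
      (nhds (sInf {r : ℝ | ∃ (w : EVec n → Fin N → ℝ)
        (Dw : EVec n → Fin N → Fin n → ℝ),
        HasWeakDerivOn Ω w Dw ∧ r = FF Ω f T₀ Dw})) ∧
    Filter.Tendsto (fun k => sInf {r : ℝ | ∃ (w : EVec n → Fin N → ℝ)
        (Dw : EVec n → Fin N → Fin n → ℝ), MemW12 Ω w Dw ∧ r = FFk Ω f T₀ k Dw})
      Filter.atTop
      (nhds (sInf {r : ℝ | ∃ (w : EVec n → Fin N → ℝ)
        (Dw : EVec n → Fin N → Fin n → ℝ),
        HasWeakDerivOn Ω w Dw ∧ r = FF Ω f T₀ Dw})) ∧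
    Filter.Tendsto (fun k : ℕ => (k : ℝ)⁻¹ * ∫ x in Ω, mnorm (Du k x) ^ 2)
      Filter.atTop (nhds 0) ∧
    ∃ C : ℝ, ∀ k, 0 < k →
      ((∫ x in Ω, vnorm (u k x)) + ∫ x in Ω, mnorm (Du k x)) +
        (k : ℝ)⁻¹ * ((∫ x in Ω, vnorm (u k x) ^ 2) + ∫ x in Ω, mnorm (Du k x) ^ 2)
          ≤ C := by
  obtain ⟨hpos, hlip⟩ := f_facts L f f' hderiv hconv hf0 hf'0 (fun t ht => (hgrowth t ht).2)
  have hL : 0 ≤ L := hν.le.trans hνL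
  have hΩf : volume Ω ≠ ∞ := hΩbdd.measure_lt_top.ne
  obtain ⟨B, c, C, hc, hB, hcoer, hFlip⟩ := FF_facts hΩf hL hpos hf0 hlip hfinf T₀ hTmeas hTsmall
  obtain ⟨CP, hCP, hpoin⟩ := vec_poinc N hΩ hΩbdd
  set S1 : Set ℝ := {r : ℝ | ∃ (w : EVec n → Fin N → ℝ)
        (Dw : EVec n → Fin N → Fin n → ℝ), HasWeakDerivOn Ω w Dw ∧ r = FF Ω f T₀ Dw} with hS1
  set I := sInf S1 with hI
  have hbdd : BddBelow S1 := by
    refine ⟨-C, ?_⟩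
    rintro r ⟨w, Dw, hw, rfl⟩
    have h1 := hcoer Dw hw.2.1
    have h2 : 0 ≤ c * ∫ x in Ω, mnorm (Dw x) :=
      mul_nonneg hc.le (integral_nonneg fun x => mnorm_nonneg _)
    linarith
  have hm0 : mnorm (0 : Fin N → Fin n → ℝ) = 0 := by simp [mnorm, mdot]
  have hv0 : vnorm (0 : Fin N → ℝ) = 0 := by simp [vnorm]
  have hW0 : MemW12 Ω (0 : EVec n → Fin N → ℝ) (0 : EVec n → Fin N → Fin n → ℝ) := by
    refine ⟨⟨integrable_zero _ _ _, integrable_zero _ _ _, ?_⟩, ?_, ?_⟩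
    · intro φ _ _ _ a i; simp
    · simp [hv0]
    · simp [hm0]
  have hF0 : FF Ω f T₀ (0 : EVec n → Fin N → Fin n → ℝ) = 0 := by
    simp [FF, hm0, hf0, mdot]
  have hne : S1.Nonempty := ⟨_, 0, 0, hW0.1, rfl⟩
  have hq0 : ∀ D : EVec n → Fin N → Fin n → ℝ, 0 ≤ ∫ x in Ω, mnorm (D x) ^ 2 :=
    fun D => integral_nonneg fun x => sq_nonneg _
  have hS2 : ∀ k, 0 < k → sInf {r : ℝ | ∃ (w : EVec n → Fin N → ℝ)
        (Dw : EVec n → Fin N → Fin n → ℝ), MemW12 Ω w Dw ∧ r = FFk Ω f T₀ k Dw} =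
        FFk Ω f T₀ k (Du k) := by
    intro k hk
    refine IsLeast.csInf_eq ⟨⟨u k, Du k, hmem k hk, rfl⟩, ?_⟩
    rintro r ⟨w, Dw, hw, rfl⟩
    exact hmin k hk w Dw hw
  have hlow : ∀ k, 0 < k → I ≤ FF Ω f T₀ (Du k) := fun k hk =>
    csInf_le hbdd ⟨u k, Du k, (hmem k hk).1, rfl⟩
  have hmid : ∀ k, FF Ω f T₀ (Du k) ≤ FFk Ω f T₀ k (Du k) := fun k => by
    have h1 := hq0 (Du k)
    have h2 : 0 ≤ (2 * (k : ℝ))⁻¹ * ∫ x in Ω, mnorm (Du k x) ^ 2 := by positivity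
    rw [FFk]; linarith
  have hA : Tendsto (fun k => FFk Ω f T₀ k (Du k)) atTop (𝓝 I) := by
    rw [tendsto_order]
    constructor
    · intro a ha
      filter_upwards [eventually_gt_atTop 0] with k hk
      exact ha.trans_le ((hlow k hk).trans (hmid k))
    · intro a ha
      obtain ⟨r, ⟨w, Dw, hw, rfl⟩, hr⟩ := exists_lt_of_csInf_lt hne ha
      set δ := a - FF Ω f T₀ Dw with hδ
      have hδ0 : 0 < δ := sub_pos.2 hr
      obtain ⟨w', Dw', hw', hd⟩ := dense_W12 hΩ hΩbdd hw (ε := δ / (2 * (B + 1))) (by positivity)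
      have h1 := hFlip Dw' Dw hw'.1.2.1 hw.2.1
      have h2 : B * ∫ x in Ω, mnorm (Dw' x - Dw x) ≤ δ / 2 := by
        calc _ ≤ B * (δ / (2 * (B + 1))) := mul_le_mul_of_nonneg_left hd hB
          _ ≤ (B + 1) * (δ / (2 * (B + 1))) := by gcongr; linarith
          _ = δ / 2 := by field_simp
      have h3 : FF Ω f T₀ Dw' < a := by linarith
      have h4 : Tendsto (fun k : ℕ => FFk Ω f T₀ k Dw') atTop (𝓝 (FF Ω f T₀ Dw' + 0 * ∫ x in Ω, mnorm (Dw' x) ^ 2)) := by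
        refine tendsto_const_nhds.add (Tendsto.mul_const _ ?_)
        refine tendsto_inv_atTop_zero.comp (Tendsto.const_mul_atTop two_pos tendsto_natCast_atTop_atTop)
      rw [zero_mul, add_zero] at h4
      filter_upwards [h4.eventually (gt_mem_nhds h3), eventually_gt_atTop 0] with k hk hk0
      exact (hmin k hk0 w' Dw' hw').trans_lt hk
  have hFt : Tendsto (fun k => FF Ω f T₀ (Du k)) atTop (𝓝 I) := by
    refine tendsto_of_tendsto_of_tendsto_of_le_of_le' tendsto_const_nhds hA ?_ (Eventually.of_forall hmid)
    filter_upwards [eventually_gt_atTop 0] with k hk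
    exact hlow k hk
  refine ⟨hFt, ?_, ?_, ?_⟩
  · refine hA.congr' ?_
    filter_upwards [eventually_gt_atTop 0] with k hk
    exact (hS2 k hk).symm
  · have h1 := (hA.sub hFt).const_mul 2
    rw [sub_self, mul_zero] at h1
    refine h1.congr fun k => ?_
    rw [FFk, mul_inv]
    ring
  · refine ⟨(CP + 1) * (C / c) + (CP + 1) * (2 * C), fun k hk => ?_⟩
    have h1 := hmin k hk 0 0 hW0
    have h2 : FFk Ω f T₀ k (0 : EVec n → Fin N → Fin n → ℝ) = 0 := by
      rw [FFk, hF0]; simp [hm0]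
    rw [h2, FFk] at h1
    have h3 := hcoer (Du k) (hmem k hk).1.2.1
    obtain ⟨p1, p2⟩ := hpoin (u k) (Du k) (hmem k hk) (hzero k hk)
    set X := ∫ x in Ω, mnorm (Du k x)
    set Y := ∫ x in Ω, mnorm (Du k x) ^ 2
    have hX0 : 0 ≤ X := integral_nonneg fun x => mnorm_nonneg _
    have hY0 : 0 ≤ Y := hq0 _
    have hk' : (0:ℝ) < k := by exact_mod_cast hk
    have hYk : 0 ≤ (k:ℝ)⁻¹ * Y := by positivity
    have e : (2 * (k:ℝ))⁻¹ * Y = ((k:ℝ)⁻¹ * Y) / 2 := by rw [mul_inv]; ring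
    rw [e] at h1
    have hcX : 0 ≤ c * X := by positivity
    have hXb : X ≤ C / c := by rw [le_div_iff₀ hc]; linarith
    have hYb : (k:ℝ)⁻¹ * Y ≤ 2 * C := by linarith
    have q1 : (k:ℝ)⁻¹ * ∫ x in Ω, vnorm (u k x) ^ 2 ≤ CP * ((k:ℝ)⁻¹ * Y) := by
      calc _ ≤ (k:ℝ)⁻¹ * (CP * Y) := by gcongr
        _ = _ := by ring
    calc _ ≤ (CP + 1) * X + (CP + 1) * ((k:ℝ)⁻¹ * Y) := by
          rw [mul_add]; linarith
      _ ≤ _ := by gcongr
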